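/- Let B^H be a d-dimensional fractional Brownian motion of Hurst index H ∈ (0,1), I = [a,b] with 0 < a < b ≤ 1, f : I → ℝ^d an H-Hölder continuous function, and E ⊆ I, F ⊆ ℝ^d compact sets with 0 < dim(F) ≤ \overline{dim}_M(F) < d. Then for all γ, γ' with 0 < γ < dim(F) ≤ \overline{dim}_M(F) < γ' < d there exists a constant c ≥ 1 (depending on E, F, H, the Hölder constant of f, γ and γ') such that c^{−1} · C^{H(d−γ)}(E) ≤ ℙ{(B^H + f)(E) ∩ F ≠ ∅} ≤ c · ℋ^{H(d−γ')}(E). -/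

import Mathlib

open MeasureTheory Set ENNReal

/-- The `β`-dimensional Hausdorff measure of `G` with respect to the distance
function `ρ`, defined via countable coverings by `ρ`-balls of radii at most `δ`,
letting `δ → 0` (i.e. taking the supremum over `δ > 0`). -/
noncomputable def hMeasure {X : Type*} (ρ : X → X → ℝ) (β : ℝ) (G : Set X) : ℝ≥0∞ :=
  ⨆ (δ : ℝ) (_ : 0 < δ), ⨅ (c : ℕ → X) (r : ℕ → ℝ)
    (_ : ∀ n, 0 < r n ∧ r n ≤ δ) (_ : G ⊆ ⋃ n, {y | ρ y (c n) < r n}),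
    ∑' n, ENNReal.ofReal ((2 * r n) ^ β)

/-- The radial kernel `φ_α` : `r^{-α}` for `α > 0`, `log(e / (r ⊓ 1))` for `α = 0`,
and `1` for `α < 0`. -/
noncomputable def radialKernel (α : ℝ) (r : ℝ) : ℝ≥0∞ :=
  if 0 < α then ENNReal.ofReal r ^ (-α)
  else if α = 0 then ENNReal.ofReal (Real.log (Real.exp 1 / min r 1))
  else 1

/-- The `φ_α`-energy of a measure `μ` with respect to the distance function `ρ`. -/
noncomputable def energy {X : Type*} [MeasurableSpace X] (ρ : X → X → ℝ) (α : ℝ)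
    (μ : MeasureTheory.Measure X) : ℝ≥0∞ :=
  ∫⁻ u, ∫⁻ v, radialKernel α (ρ u v) ∂μ ∂μ

/-- The Bessel–Riesz capacity of order `α` of `G` with respect to the distance
function `ρ`: the reciprocal of the infimum of `φ_α`-energies over probability
measures carried by `G` (equal to `0` if every such energy is infinite). -/
noncomputable def capacity {X : Type*} [MeasurableSpace X] (ρ : X → X → ℝ) (α : ℝ)
    (G : Set X) : ℝ≥0∞ :=
  (⨅ (μ : MeasureTheory.Measure X) (_ : MeasureTheory.IsProbabilityMeasure μ)
    (_ : μ Gᶜ = 0), energy ρ α μ)⁻¹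

/-- The covering number `N_ρ(G, r)`: the smallest number of open `ρ`-balls of
radius `r` needed to cover `G` (`∞` if no finite cover exists). -/
noncomputable def covN {X : Type*} (ρ : X → X → ℝ) (G : Set X) (r : ℝ) : ℝ≥0∞ :=
  ⨅ (s : Finset X) (_ : G ⊆ ⋃ x ∈ s, {y | ρ y x < r}), (s.card : ℝ≥0∞)

/-- The upper Minkowski dimension of `G` with respect to the distance function `ρ`. -/
noncomputable def upMinkDim {X : Type*} (ρ : X → X → ℝ) (G : Set X) : ℝ :=
  Filter.limsup (fun r : ℝ => Real.log (covN ρ G r).toReal / Real.log (1 / r))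
    (nhdsWithin 0 (Set.Ioi 0))

/-- Covariance function of fractional Brownian motion of Hurst index `H`. -/
noncomputable def fbmCov (H s t : ℝ) : ℝ :=
  (|s| ^ (2 * H) + |t| ^ (2 * H) - |t - s| ^ (2 * H)) / 2

/-- `B` is a `d`-dimensional fractional Brownian motion of Hurst index `H` on `[0,1]`
under the probability measure `ℙ`: its coordinates are independent copies of a
real-valued centered Gaussian process with continuous sample paths, starting at `0`,
whose covariance is `fbmCov H`. -/
structure IsFBM {Ω : Type*} [MeasurableSpace Ω] (ℙ : MeasureTheory.Measure Ω)
    (H : ℝ) (d : ℕ) (B : Ω → ℝ → EuclideanSpace ℝ (Fin d)) : Prop where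
  meas : ∀ t : ℝ, Measurable fun ω => B ω t
  cont : ∀ ω, ContinuousOn (fun t => B ω t) (Set.Icc 0 1)
  start : ∀ ω, B ω 0 = 0
  indep : ProbabilityTheory.iIndepFun
      (fun (i : Fin d) (ω : Ω) => fun t : ℝ => B ω t i) ℙ
  gaussian : ∀ i : Fin d, ∀ (n : ℕ) (t : Fin n → ℝ) (a : Fin n → ℝ),
      (∀ j, t j ∈ Set.Icc (0 : ℝ) 1) →
      ∃ v : NNReal, (v : ℝ) = ∑ j, ∑ k, a j * a k * fbmCov H (t j) (t k) ∧
        MeasureTheory.Measure.map (fun ω => ∑ j, a j * B ω (t j) i) ℙ =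
          ProbabilityTheory.gaussianReal 0 v

/-- The parabolic metric `ρ_{d_H}((s,x),(t,y)) = max(|t-s|^H, ‖x-y‖)` on `ℝ × ℝ^d`. -/
noncomputable def parabolicDist (H : ℝ) {d : ℕ}
    (p q : ℝ × EuclideanSpace ℝ (Fin d)) : ℝ :=
  max (|p.1 - q.1| ^ H) (dist p.2 q.2)

/-- `f` is `γ`-Hölder continuous on `s`. -/
def HolderWithExp {E : Type*} [NormedAddCommGroup E] (f : ℝ → E) (γ : ℝ) (s : Set ℝ) : Prop :=
  ∃ K : ℝ, ∀ x ∈ s, ∀ y ∈ s, ‖f x - f y‖ ≤ K * |x - y| ^ γ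

section

open ProbabilityTheory

lemma fb_gauss_pdf_int (v : NNReal) (hv : v ≠ 0) (y η k : ℝ) (hη : 0 ≤ η)
    (hk : ∀ x ∈ Icc (y-η) (y+η), Real.exp (- x^2 / (2 * v)) ≤ k) :
    gaussianReal 0 v (Icc (y-η) (y+η)) ≤ ENNReal.ofReal (k * (η / √v)) := by
  have hk0 : 0 ≤ k := (Real.exp_pos _).le.trans (hk y ⟨by linarith, by linarith⟩)
  rw [gaussianReal_apply 0 hv]
  have hv0 : 0 < (v:ℝ) := by positivity
  calc ∫⁻ x in Icc (y-η) (y+η), gaussianPDF 0 v x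
      ≤ ∫⁻ x in Icc (y-η) (y+η), ENNReal.ofReal ((√(2 * Real.pi * v))⁻¹ * k) := by
        apply setLIntegral_mono measurable_const
        intro x hx
        unfold gaussianPDF gaussianPDFReal
        apply ENNReal.ofReal_le_ofReal
        have := hk x hx
        simp only [sub_zero]
        gcongr
    _ = ENNReal.ofReal ((√(2 * Real.pi * v))⁻¹ * k * (2 * η)) := by
        rw [setLIntegral_const, Real.volume_Icc, ← ENNReal.ofReal_mul (by positivity)]
        ring_nf
    _ ≤ _ := by
        apply ENNReal.ofReal_le_ofReal
        have h2 : (√(2 * Real.pi * v)) = √(2 * Real.pi) * √v := by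
          rw [Real.sqrt_mul (by positivity)]
        have h3 : 2 ≤ √(2 * Real.pi) := by
          apply Real.le_sqrt_of_sq_le
          nlinarith [Real.pi_gt_three]
        rw [h2]
        have h4 : (√(2 * Real.pi))⁻¹ ≤ 2⁻¹ := by gcongr
        have h5 : 0 < √(v:ℝ) := by positivity
        calc (√(2 * Real.pi) * √v)⁻¹ * k * (2 * η) = (√(2 * Real.pi))⁻¹ * (2 * (k * (η / √v))) := by
              rw [mul_inv]; field_simp
          _ ≤ 2⁻¹ * (2 * (k * (η / √v))) := by gcongr
          _ = _ := by ring

lemma fb_gauss_upper (v : NNReal) (hv : v ≠ 0) (y η : ℝ) (hη : 0 ≤ η) :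
    gaussianReal 0 v (Icc (y-η) (y+η)) ≤ ENNReal.ofReal (η / √v) := by
  have := fb_gauss_pdf_int v hv y η 1 hη (fun x _ => by
    apply Real.exp_le_one_iff.2
    apply div_nonpos_of_nonpos_of_nonneg <;> nlinarith [sq_nonneg x, v.2])
  simpa using this

lemma fb_gauss_decay (d : ℕ) (v : NNReal) (hv : v ≠ 0) (y η : ℝ) (hη : 0 < η) (hy : 2 * η ≤ |y|) :
    gaussianReal 0 v (Icc (y-η) (y+η)) ≤
      ENNReal.ofReal (((2*d).factorial * 8 ^ d * (√v / |y|) ^ d) * (η / √v)) := by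
  have hv0 : 0 < (v:ℝ) := by positivity
  have hy0 : 0 < |y| := by linarith
  apply fb_gauss_pdf_int v hv y η _ hη.le
  intro x hx
  have hx2 : |y| / 2 ≤ |x| := by
    have : |y| ≤ |x| + |y - x| := by
      have := abs_add_le x (y-x); simpa using this
    have h2 : |y - x| ≤ η := by rw [abs_le]; constructor <;> linarith [hx.1, hx.2]
    linarith
  have hs : √(v:ℝ) ^ 2 = v := Real.sq_sqrt hv0.le
  have hs0 : 0 < √(v:ℝ) := by positivity
  set w := |y| / √v with hw
  have hw0 : 0 < w := by positivity
  have hinv : √v / |y| = w⁻¹ := by rw [hw, inv_div]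
  rw [hinv]
  -- exp(-x²/2v) ≤ exp(-w²/8)
  have h1 : Real.exp (-x^2/(2*v)) ≤ Real.exp (-(w^2/8)) := by
    apply Real.exp_le_exp.2
    have : w^2 = y^2 / v := by rw [hw, div_pow, sq_abs, hs]
    rw [this, neg_div, neg_le_neg_iff, div_div, div_le_div_iff₀ (by positivity) (by positivity)]
    have h3 : y^2/4 ≤ x^2 := by
      have := mul_self_le_mul_self (by positivity) hx2
      rw [abs_mul_abs_self] at this
      nlinarith [abs_mul_abs_self y]
    nlinarith
  refine h1.trans ?_
  rw [Real.exp_neg]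
  -- exp(w^2/8) ≥ ...
  by_cases hw1 : 1 ≤ w
  · have h2 := Real.pow_div_factorial_le_exp (w^2/8) (by positivity) d
    have h3 : (Real.exp (w^2/8))⁻¹ ≤ ((w^2/8)^d / d.factorial)⁻¹ := by
      gcongr
    refine h3.trans ?_
    rw [inv_div, div_pow, div_div_eq_mul_div, ← pow_mul]
    have h4 : w^(2*d) ≥ w^d := pow_le_pow_right₀ hw1 (by omega)
    have h5 : (d.factorial:ℝ) ≤ (2*d).factorial := by
      exact_mod_cast Nat.factorial_le (by omega)
    rw [inv_pow, ← div_eq_mul_inv]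
    gcongr
  · push Not at hw1
    have : (Real.exp (w^2/8))⁻¹ ≤ 1 := inv_le_one_of_one_le₀ (Real.one_le_exp (by positivity))
    refine this.trans ?_
    have h6 : (1:ℝ) ≤ w⁻¹ := (one_le_inv₀ hw0).2 hw1.le
    have h7 : (1:ℝ) ≤ (2*d).factorial := by exact_mod_cast Nat.factorial_pos _
    have h8 : (1:ℝ) ≤ 8^d := one_le_pow₀ (by norm_num)
    have h9 : (1:ℝ) ≤ (w⁻¹)^d := one_le_pow₀ h6
    exact one_le_mul_of_one_le_of_one_le (one_le_mul_of_one_le_of_one_le h7 h8) h9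

lemma fb_gauss_lower (v : NNReal) (v0 M : ℝ) (hv0 : 0 < v0) (hv : v0 ≤ v) (hv1 : (v:ℝ) ≤ 1) (y η : ℝ)
    (hη : 0 ≤ η) (hη1 : η ≤ 1) (hy : |y| ≤ M) :
    ENNReal.ofReal (Real.exp (-(M+1)^2/(2*v0)) / 2 * η) ≤ gaussianReal 0 v (Icc (y-η) (y+η)) := by
  have hvp : 0 < (v:ℝ) := hv0.trans_le hv
  have hvne : v ≠ 0 := by rintro rfl; simp at hvp
  have hM : 0 ≤ M := (abs_nonneg y).trans hy
  rw [gaussianReal_apply 0 hvne]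
  calc ENNReal.ofReal (Real.exp (-(M+1)^2/(2*v0)) / 2 * η)
      ≤ ENNReal.ofReal ((√(2 * Real.pi))⁻¹ * Real.exp (-(M+1)^2/(2*v0)) * (2 * η)) := by
        apply ENNReal.ofReal_le_ofReal
        have h3 : √(2 * Real.pi) ≤ 4 := by
          rw [Real.sqrt_le_left (by norm_num)]
          nlinarith [Real.pi_le_four]
        have h4 : (4:ℝ)⁻¹ ≤ (√(2 * Real.pi))⁻¹ := by gcongr
        have h5 : 0 ≤ Real.exp (-(M+1)^2/(2*v0)) * (2*η) := by positivity
        nlinarith [mul_le_mul_of_nonneg_right h4 h5]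
    _ = ∫⁻ x in Icc (y-η) (y+η), ENNReal.ofReal ((√(2 * Real.pi))⁻¹ * Real.exp (-(M+1)^2/(2*v0))) := by
        rw [setLIntegral_const, Real.volume_Icc, ← ENNReal.ofReal_mul (by positivity)]
        ring_nf
    _ ≤ _ := by
        apply setLIntegral_mono (measurable_gaussianPDF 0 v)
        intro x hx
        unfold gaussianPDF gaussianPDFReal
        apply ENNReal.ofReal_le_ofReal
        simp only [sub_zero]
        have hx2 : |x| ≤ M + 1 := by
          have h2 : |x - y| ≤ η := by rw [abs_le]; constructor <;> linarith [hx.1, hx.2]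
          have := abs_add_le y (x-y)
          simp only [add_sub_cancel] at this
          linarith
        have hx3 : x^2 ≤ (M+1)^2 := by rw [← sq_abs x]; gcongr
        have : 2 * Real.pi * v ≤ 2 * Real.pi := by nlinarith [Real.pi_pos]
        have h8 : -(M+1)^2/(2*v0) ≤ -x^2/(2*v) := by
          rw [neg_div, neg_div, neg_le_neg_iff]
          gcongr
        gcongr

lemma fb_indep {Ω : Type*} [MeasurableSpace Ω] (P : Measure Ω) [IsProbabilityMeasure P]
    (X W : Ω → ℝ) (hX : Measurable X) (hW : Measurable W) (A2 W2 : ℝ)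
    (h : ∀ p q : ℝ, ∃ v : NNReal, (v:ℝ) = p^2 * A2 + q^2 * W2 ∧
      P.map (fun ω => p * X ω + q * W ω) = gaussianReal 0 v) : IndepFun X W P := by
  rw [indepFun_iff_charFunDual_prod hX.aemeasurable hW.aemeasurable]
  intro L
  rw [charFunDual_eq_charFun_map_one, charFunDual_eq_charFun_map_one, charFunDual_eq_charFun_map_one,
    Measure.map_map (by fun_prop) (by fun_prop), Measure.map_map (by fun_prop) (by fun_prop),
    Measure.map_map (by fun_prop) (by fun_prop)]
  set p := L (1, 0)
  set q := L (0, 1)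
  have e1 : (L ∘ fun ω ↦ (X ω, W ω)) = fun ω => p * X ω + q * W ω := by
    ext ω
    have : ((X ω, W ω) : ℝ × ℝ) = X ω • (1, 0) + W ω • (0, 1) := by simp
    simp only [Function.comp]
    rw [this, map_add, map_smul, map_smul, smul_eq_mul, smul_eq_mul]
    ring
  have e2 : ((L ∘L ContinuousLinearMap.inl ℝ ℝ ℝ) ∘ X) = fun ω => p * X ω + 0 * W ω := by
    ext ω
    have : ((X ω, 0) : ℝ × ℝ) = X ω • (1, 0) := by simp
    simp only [Function.comp, ContinuousLinearMap.comp_apply, ContinuousLinearMap.inl_apply]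
    rw [this, map_smul, smul_eq_mul]
    ring
  have e3 : ((L ∘L ContinuousLinearMap.inr ℝ ℝ ℝ) ∘ W) = fun ω => 0 * X ω + q * W ω := by
    ext ω
    have : ((0, W ω) : ℝ × ℝ) = W ω • (0, 1) := by simp
    simp only [Function.comp, ContinuousLinearMap.comp_apply, ContinuousLinearMap.inr_apply]
    rw [this, map_smul, smul_eq_mul]
    ring
  rw [e1, e2, e3]
  obtain ⟨v1, hv1, h1⟩ := h p q
  obtain ⟨v2, hv2, h2⟩ := h p 0
  obtain ⟨v3, hv3, h3⟩ := h 0 q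
  rw [h1, h2, h3, charFun_gaussianReal, charFun_gaussianReal, charFun_gaussianReal, ← Complex.exp_add]
  have : v1 = v2 + v3 := by
    apply NNReal.coe_injective
    push_cast
    rw [hv1, hv2, hv3]; ring
  rw [this]
  congr 1
  push_cast
  ring

/-- conditional estimate -/
lemma fb_cond {Ω : Type*} [MeasurableSpace Ω] (P : Measure Ω) [IsProbabilityMeasure P]
    (X W : Ω → ℝ) (hX : Measurable X) (hW : Measurable W) (hi : IndepFun X W P)
    (κ : ℝ) (I J : Set ℝ) (hI : MeasurableSet I) (hJ : MeasurableSet J) (k : ℝ≥0∞)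
    (hk : ∀ x ∈ I, P.map W {w | w + κ * x ∈ J} ≤ k) :
    P {ω | X ω ∈ I ∧ W ω + κ * X ω ∈ J} ≤ k * P.map X I := by
  have hS : MeasurableSet {p : ℝ × ℝ | p.1 ∈ I ∧ p.2 + κ * p.1 ∈ J} := by
    apply MeasurableSet.inter
    · exact measurable_fst hI
    · exact (by fun_prop : Measurable fun p : ℝ × ℝ => p.2 + κ * p.1) hJ
  have e : P {ω | X ω ∈ I ∧ W ω + κ * X ω ∈ J} =
      (P.map (fun ω => (X ω, W ω))) {p : ℝ × ℝ | p.1 ∈ I ∧ p.2 + κ * p.1 ∈ J} := by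
    rw [Measure.map_apply (by fun_prop) hS]; rfl
  rw [e, (indepFun_iff_map_prod_eq_prod_map_map hX.aemeasurable hW.aemeasurable).1 hi]
  have : IsProbabilityMeasure (P.map W) := Measure.isProbabilityMeasure_map hW.aemeasurable
  rw [Measure.prod_apply hS, ← lintegral_indicator_const hI]
  apply lintegral_mono
  intro x
  by_cases hx : x ∈ I
  · simp only [indicator_of_mem hx]
    refine le_trans (measure_mono ?_) (hk x hx)
    intro w hw
    exact hw.2
  · simp only [indicator_of_notMem hx]
    simp [hx]

lemma fb_det (q a0 A T ρ : ℝ) (hq0 : 0 ≤ q) (hq1 : q < 1) (ha0 : 0 < a0)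
    (hA : a0 ≤ A) (hT : a0 ≤ T) (hρ : 0 < ρ) (h1 : |T - A| ≤ q * ρ)
    (h2 : ρ ≤ max T A) :
    (1 - q^2) * a0^2 / 4 * ρ^2 ≤ A^2 * T^2 - ((A^2+T^2-ρ^2)/2)^2 := by
  have e : A^2 * T^2 - ((A^2+T^2-ρ^2)/2)^2 = (1/4) * ((ρ^2-(T-A)^2) * ((T+A)^2-ρ^2)) := by ring
  have h3 : (T-A)^2 ≤ q^2*ρ^2 := by
    rw [← sq_abs (T-A), ← mul_pow]; gcongr
  have h4 : a0^2 ≤ (T+A)^2-ρ^2 := by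
    rcases le_max_iff.1 h2 with h | h
    · nlinarith
    · nlinarith
  have h5 : (1-q^2)*ρ^2 ≤ ρ^2-(T-A)^2 := by linarith
  have h6 : 0 ≤ (1-q^2)*ρ^2 := by
    apply mul_nonneg _ (sq_nonneg _); nlinarith
  have := mul_le_mul h5 h4 (sq_nonneg _) (h6.trans h5)
  rw [e]; linarith

set_option maxHeartbeats 1000000 in
lemma fb_pair {Ω : Type*} [MeasurableSpace Ω] (P : Measure Ω) [IsProbabilityMeasure P]
    (d : ℕ) (q a0 M : ℝ) (hq0 : 0 ≤ q) (hq1 : q < 1) (ha0 : 0 < a0) (hM : 0 ≤ M) :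
    ∃ K L : ℝ, 1 ≤ K ∧ 1 ≤ L ∧ ∀ (X Y : Ω → ℝ) (_ : Measurable X) (_ : Measurable Y) (A T ρ : ℝ)
    (_ : a0 ≤ A) (_ : A ≤ 1) (_ : a0 ≤ T) (_ : T ≤ 1) (_ : 0 < ρ) (_ : |T - A| ≤ q * ρ)
    (_ : ρ ≤ max T A)
    (_ : ∀ p q : ℝ, ∃ v : NNReal, (v:ℝ) = p^2 * A^2 + 2 * p * q * ((A^2+T^2-ρ^2)/2) + q^2 * T^2 ∧
      P.map (fun ω => p * X ω + q * Y ω) = gaussianReal 0 v)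
    (y z η : ℝ) (_ : 0 < η) (_ : η ≤ 1) (_ : |y| ≤ M),
    P {ω | X ω ∈ Icc (y-η) (y+η) ∧ Y ω ∈ Icc (z-η) (z+η)} ≤ ENNReal.ofReal (K * η) ∧
    P {ω | X ω ∈ Icc (y-η) (y+η) ∧ Y ω ∈ Icc (z-η) (z+η)} ≤ ENNReal.ofReal (K * (η^2/ρ)) ∧
    (L * η ≤ |y - z| → L * ρ ≤ |y - z| → 
      P {ω | X ω ∈ Icc (y-η) (y+η) ∧ Y ω ∈ Icc (z-η) (z+η)} ≤
        ENNReal.ofReal (K * (η^2/ρ) * (ρ/|y-z|)^d)) := by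
  set c0 := (1 - q^2) * a0^2 / 4 with hc0
  have hc0p : 0 < c0 := by
    have : 0 < 1 - q^2 := by nlinarith
    positivity
  set K1 := (1/a0) with hK1
  set K2 := (1/a0) * (1/√c0) with hK2
  set K3 := (1/a0) * (1/√c0) * ((2*d).factorial * 8 ^ d * (2 / a0) ^ d) with hK3
  have p1 : 0 ≤ K1 := by positivity
  have p2 : 0 ≤ K2 := by positivity
  have p3 : 0 ≤ K3 := by positivity
  refine ⟨1 + K1 + K2 + K3, 4 + 8 * (M+1) * (1/a0^2), by linarith, ?_, ?_⟩
  · have : 0 ≤ 8 * (M+1) * (1/a0^2) := by positivity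
    linarith
  intro X Y hX hY A T ρ hA hA1 hT hT1 hρ hTA hmax hlin y z η hη hη1 hy
  have hAp : 0 < A := ha0.trans_le hA
  have hTp : 0 < T := ha0.trans_le hT
  have hdet := fb_det q a0 A T ρ hq0 hq1 ha0 hA hT hρ hTA hmax
  rw [← hc0] at hdet
  set C := (A^2+T^2-ρ^2)/2 with hC
  set κ := C / A^2 with hκ
  set s2 := (A^2*T^2 - C^2)/A^2 with hs2
  have hρ1 : ρ ≤ 1 := hmax.trans (max_le hT1 hA1)
  -- W
  have hlinW : ∀ p q : ℝ, ∃ v : NNReal, (v:ℝ) = p^2 * A^2 + q^2 * s2 ∧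
      P.map (fun ω => p * X ω + q * (Y ω - κ * X ω)) = gaussianReal 0 v := by
    intro p q
    obtain ⟨v, hv, h⟩ := hlin (p - q * κ) q
    refine ⟨v, ?_, ?_⟩
    · rw [hv, hκ, hs2]; field_simp; ring
    · rw [← h]; congr 1; ext ω; ring
  have hWm : Measurable (fun ω => Y ω - κ * X ω) := by fun_prop
  have hind := fb_indep P X (fun ω => Y ω - κ * X ω) hX hWm _ _ hlinW
  obtain ⟨vX, hvX, hmX⟩ := hlinW 1 0
  obtain ⟨vW, hvW, hmW⟩ := hlinW 0 1
  simp only [one_pow, one_mul, zero_mul, add_zero, zero_add, ne_eq, OfNat.ofNat_ne_zero, not_false_eq_true, zero_pow] at hvX hmX hvW hmW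
  have hs2l : c0 * ρ^2 ≤ s2 := by
    rw [hs2, le_div_iff₀ (by positivity)]
    have : A^2 ≤ 1 := pow_le_one₀ hAp.le hA1
    have : c0 * ρ^2 * A^2 ≤ c0*ρ^2 * 1 := by gcongr
    linarith
  have hs2u : s2 ≤ (ρ/a0)^2 := by
    rw [hs2, div_pow ρ a0 2]
    have e : A^2 * T^2 - C^2 = (1/4) * ((ρ^2-(T-A)^2) * ((T+A)^2-ρ^2)) := by rw [hC]; ring
    have : A^2 * T^2 - C^2 ≤ ρ^2 := by
      rw [e]
      have h5 : (T+A)^2 - ρ^2 ≤ 4 := by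
        have : (T+A)^2 ≤ 2^2 := by gcongr; linarith
        linarith [sq_nonneg ρ]
      have h6 : ρ^2-(T-A)^2 ≤ ρ^2 := by linarith [sq_nonneg (T-A)]
      have h7 : 0 ≤ (ρ^2-(T-A)^2) := by
        have : (T-A)^2 ≤ (q*ρ)^2 := by rw [← sq_abs (T-A)]; gcongr
        have : (q*ρ)^2 ≤ ρ^2 := by gcongr; exact mul_le_of_le_one_left hρ.le hq1.le
        linarith
      linarith [mul_le_mul_of_nonneg_left h5 h7]
    exact div_le_div₀ (sq_nonneg _) this (pow_pos ha0 2) (by gcongr : a0^2 ≤ A^2)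
  have hs2p : 0 < s2 := lt_of_lt_of_le (by positivity) hs2l
  have hvXne : vX ≠ 0 := by rintro rfl; exact (pow_pos hAp 2).ne hvX
  have hvWne : vW ≠ 0 := by rintro rfl; simp at hvW; linarith
  have hsX : √(vX:ℝ) = A := by rw [hvX, Real.sqrt_sq hAp.le]
  have hσl : √c0 * ρ ≤ √(vW:ℝ) := by
    rw [hvW]; apply Real.le_sqrt_of_sq_le
    rw [mul_pow, Real.sq_sqrt hc0p.le]; exact hs2l
  have hσu : √(vW:ℝ) ≤ ρ / a0 := by
    rw [hvW]; exact Real.sqrt_le_iff.2 ⟨by positivity, hs2u⟩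
  have hσp : 0 < √(vW:ℝ) := by rw [hvW]; positivity
  have hset : {ω | X ω ∈ Icc (y-η) (y+η) ∧ Y ω ∈ Icc (z-η) (z+η)} =
      {ω | X ω ∈ Icc (y-η) (y+η) ∧ (Y ω - κ * X ω) + κ * X ω ∈ Icc (z-η) (z+η)} := by
    simp
  have hX1 : P.map X (Icc (y-η) (y+η)) ≤ ENNReal.ofReal (η / a0) := by
    rw [hmX]
    refine (fb_gauss_upper vX hvXne y η hη.le).trans ?_
    rw [hsX]; apply ENNReal.ofReal_le_ofReal; gcongr
  have hJ : ∀ x, {w : ℝ | w + κ * x ∈ Icc (z-η) (z+η)} = Icc ((z - κ * x) - η) ((z - κ*x) + η) := by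
    intro x; ext w; simp only [mem_ofPred_eq, mem_Icc]
    constructor <;> rintro ⟨h1, h2⟩ <;> constructor <;> linarith
  refine ⟨?_, ?_, ?_⟩
  · calc P {ω | X ω ∈ Icc (y-η) (y+η) ∧ Y ω ∈ Icc (z-η) (z+η)} ≤ P (X ⁻¹' Icc (y-η) (y+η)) :=
        measure_mono fun ω h => h.1
      _ = P.map X (Icc (y-η) (y+η)) := by rw [Measure.map_apply hX measurableSet_Icc]
      _ ≤ _ := hX1
      _ ≤ _ := by
        apply ENNReal.ofReal_le_ofReal
        have : η / a0 = K1 * η := by rw [hK1]; ring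
        rw [this]; gcongr; linarith
  · rw [hset]
    refine (fb_cond P X _ hX hWm hind κ _ _ measurableSet_Icc measurableSet_Icc
      (ENNReal.ofReal (η / (√c0 * ρ))) ?_).trans ?_
    · intro x hx
      rw [hJ, hmW]
      refine (fb_gauss_upper vW hvWne _ η hη.le).trans ?_
      apply ENNReal.ofReal_le_ofReal; gcongr
    · refine (mul_le_mul_right hX1 _).trans ?_
      rw [← ENNReal.ofReal_mul (by positivity)]
      apply ENNReal.ofReal_le_ofReal
      have : η / (√c0 * ρ) * (η / a0) = K2 * (η^2/ρ) := by rw [hK2]; field_simp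
      rw [this]; gcongr; linarith
  · intro hL1 hL2
    have hm : 0 ≤ 8 * (M+1) * (1/a0^2) := by positivity
    have hyz4 : 4 * η ≤ |y - z| := by
      have := mul_nonneg hm hη.le
      linarith
    have hyzp : 0 < |y - z| := by linarith
    have hκ1 : |κ - 1| ≤ 2 * ρ / a0^2 := by
      have e : κ - 1 = ((T-A)*(T+A) - ρ^2) / (2 * A^2) := by
        rw [hκ, hC]; field_simp; ring
      rw [e, abs_div, abs_of_pos (by positivity : 0 < 2 * A^2)]
      have h1 : |(T-A)*(T+A) - ρ^2| ≤ 4 * ρ := by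
        refine (abs_sub _ _).trans ?_
        rw [abs_mul, abs_of_pos (by positivity : 0 < T + A), abs_of_nonneg (sq_nonneg ρ)]
        have : |T-A| ≤ ρ := hTA.trans (mul_le_of_le_one_left hρ.le hq1.le)
        have : |T-A| * (T+A) ≤ ρ * 2 := by gcongr; linarith
        have : ρ^2 ≤ ρ := by rw [sq]; exact mul_le_of_le_one_left hρ.le hρ1
        linarith
      calc |(T-A)*(T+A) - ρ^2| / (2*A^2) ≤ (4 * ρ) / (2 * a0^2) := by gcongr
        _ = _ := by field_simp; ring
    have hw : ∀ x ∈ Icc (y-η) (y+η), |y-z|/2 ≤ |z - κ * x| := by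
      intro x hx
      have hxy : |x - y| ≤ η := by rw [abs_le]; constructor <;> linarith [hx.1, hx.2]
      have hxM : |x| ≤ M + 1 := by
        have := abs_add_le y (x-y); simp only [add_sub_cancel] at this; linarith
      have h1 : |y - z| ≤ |z - κ * x| + |x - y| + |κ - 1| * |x| := by
        rw [← abs_mul]
        have e : z - y = (z - κ * x) + (x - y) + (κ - 1) * x := by ring
        rw [abs_sub_comm y z, e]
        exact abs_add_three _ _ _
      have h2 : |κ - 1| * |x| ≤ (2 * ρ / a0^2) * (M+1) := by gcongr
      have h3 : (2 * ρ / a0^2) * (M+1) ≤ |y - z| / 4 := by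
        have : (2 * ρ / a0^2) * (M+1) = (8 * (M+1) * (1/a0^2)) * ρ / 4 := by ring
        rw [this]
        have : (8 * (M+1) * (1/a0^2)) * ρ ≤ |y-z| := by linarith
        linarith
      linarith
    rw [hset]
    refine (fb_cond P X _ hX hWm hind κ _ _ measurableSet_Icc measurableSet_Icc
      (ENNReal.ofReal (((2*d).factorial * 8 ^ d * ((ρ/a0) / (|y-z|/2)) ^ d) * (η / (√c0 * ρ)))) ?_).trans ?_
    · intro x hx
      rw [hJ, hmW]
      have hwx := hw x hx
      refine (fb_gauss_decay d vW hvWne _ η hη (by linarith)).trans ?_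
      apply ENNReal.ofReal_le_ofReal
      have : 0 < |z - κ * x| := by linarith
      gcongr
    · refine (mul_le_mul_right hX1 _).trans ?_
      rw [← ENNReal.ofReal_mul (by positivity)]
      apply ENNReal.ofReal_le_ofReal
      have : ((2*d).factorial * 8 ^ d * ((ρ/a0) / (|y-z|/2)) ^ d) * (η / (√c0 * ρ)) * (η / a0) 
          = K3 * (η^2/ρ) * (ρ/|y-z|)^d := by
        have e : (ρ/a0) / (|y-z|/2) = (2/a0) * (ρ/|y-z|) := by field_simp
        rw [hK3, e, mul_pow]; field_simp
      rw [this]; gcongr; linarith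

lemma fb_geom_aux (a H s t : ℝ) (ha : 0 < a) (hH : H ∈ Ioo (0:ℝ) 1) (hs : a ≤ s) (hst : s < t) (ht : t ≤ 1) :
    |t^H - s^H| ≤ (1-a)^(1-H) * (t-s)^H ∧ (t-s)^H ≤ t^H := by
  obtain ⟨h0, h1⟩ := hH
  have hs0 : 0 < s := ha.trans_le hs
  have ht0 : 0 < t := hs0.trans hst
  refine ⟨?_, Real.rpow_le_rpow (by linarith) (by linarith) h0.le⟩
  have hm : s^H ≤ t^H := Real.rpow_le_rpow hs0.le hst.le h0.le
  rw [abs_of_nonneg (by linarith)]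
  set u := s/t with hu
  have hu0 : 0 < u := by positivity
  have hu1 : u < 1 := by rw [hu, div_lt_one ht0]; exact hst
  have hua : a ≤ u := by rw [hu, le_div_iff₀ ht0]; nlinarith
  have e1 : s^H = t^H * u^H := by
    rw [← Real.mul_rpow ht0.le hu0.le, hu]; congr 1; field_simp
  have e2 : (t-s)^H = t^H * (1-u)^H := by
    rw [← Real.mul_rpow ht0.le (by linarith), hu]; congr 1; field_simp
  have h3 : u ≤ u^H := by
    have := Real.rpow_le_rpow_of_exponent_ge hu0 hu1.le h1.le
    simpa using this
  have h4 : 1 - u = (1-u)^(1-H) * (1-u)^H := by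
    rw [← Real.rpow_add (by linarith)]; simp
  have h5 : (1-u)^(1-H) ≤ (1-a)^(1-H) := Real.rpow_le_rpow (by linarith) (by linarith) (by linarith)
  have h6 : 0 < t^H := Real.rpow_pos_of_pos ht0 _
  have h7 : 0 < (1-u)^H := Real.rpow_pos_of_pos (by linarith) _
  rw [e1, e2]
  have h8 : 1 - u^H ≤ (1-a)^(1-H) * (1-u)^H := by
    have := mul_le_mul_of_nonneg_right h5 h7.le
    linarith
  calc t^H - t^H * u^H = t^H * (1 - u^H) := by ring
    _ ≤ t^H * ((1-a)^(1-H) * (1-u)^H) := by gcongr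
    _ = _ := by ring

lemma fb_geom (a H s t : ℝ) (ha : 0 < a) (hH : H ∈ Ioo (0:ℝ) 1) (hs : s ∈ Icc a 1) (ht : t ∈ Icc a 1)
    (hst : s ≠ t) :
    |t^H - s^H| ≤ (1-a)^(1-H) * |t-s|^H ∧ |t-s|^H ≤ max (t^H) (s^H) := by
  rcases lt_or_gt_of_ne hst with h | h
  · have := fb_geom_aux a H s t ha hH hs.1 h ht.2
    rw [abs_of_pos (sub_pos.2 h)]
    exact ⟨this.1, this.2.trans (le_max_left _ _)⟩
  · have := fb_geom_aux a H t s ha hH ht.1 h hs.2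
    rw [abs_sub_comm t s, abs_of_pos (sub_pos.2 h), abs_sub_comm]
    exact ⟨this.1, this.2.trans (le_max_right _ _)⟩

lemma fb_sq (H s : ℝ) (hs : 0 ≤ s) : s ^ (2*H) = (s^H)^2 := by
  rw [mul_comm, Real.rpow_mul hs]; norm_num

lemma fb_pairlaw {Ω : Type*} [MeasurableSpace Ω] (P : Measure Ω)
    (H : ℝ) (hH : H ∈ Ioo (0 : ℝ) 1) (d : ℕ)
    (B : Ω → ℝ → EuclideanSpace ℝ (Fin d)) (hB : IsFBM P H d B) (s t : ℝ) (hs : s ∈ Icc (0:ℝ) 1)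
    (ht : t ∈ Icc (0:ℝ) 1) (i : Fin d) (p q : ℝ) :
    ∃ v : NNReal, (v:ℝ) = p^2 * (s^H)^2 + 2 * p * q * (((s^H)^2+(t^H)^2-(|t-s|^H)^2)/2) + q^2 * (t^H)^2 ∧
      P.map (fun ω => p * B ω s i + q * B ω t i) = gaussianReal 0 v := by
  obtain ⟨v, hv, h⟩ := hB.gaussian i 2 ![s,t] ![p,q] (by
    intro j; fin_cases j <;> simpa)
  refine ⟨v, ?_, ?_⟩
  · rw [hv]
    have h2 : (0:ℝ)^(2*H) = 0 := Real.zero_rpow (by linarith [hH.1])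
    simp only [Fin.sum_univ_two, fbmCov, Matrix.cons_val_zero, Matrix.cons_val_one, sub_self, abs_zero, h2]
    rw [abs_of_nonneg hs.1, abs_of_nonneg ht.1, abs_sub_comm s t, fb_sq H _ (abs_nonneg _), fb_sq H _ hs.1, fb_sq H _ ht.1]
    ring
  · rw [← h]; simp [Fin.sum_univ_two]

lemma fb_multi {Ω : Type*} [MeasurableSpace Ω] (P : Measure Ω) [IsProbabilityMeasure P]
    (H : ℝ) (hH : H ∈ Ioo (0 : ℝ) 1) (d : ℕ) (hd : 0 < d)
    (B : Ω → ℝ → EuclideanSpace ℝ (Fin d)) (hB : IsFBM P H d B) (a M : ℝ) (ha : 0 < a) (ha1 : a < 1)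
    (hM : 0 ≤ M) :
    ∃ K : ℝ, 1 ≤ K ∧ ∀ s ∈ Icc a 1, ∀ t ∈ Icc a 1, s ≠ t → ∀ (y z : Fin d → ℝ) (η : ℝ),
      (∀ i, |y i| ≤ M) → 0 < η → η ≤ 1 →
      P {ω | (∀ i, B ω s i ∈ Icc (y i - η) (y i + η)) ∧ (∀ i, B ω t i ∈ Icc (z i - η) (z i + η))} ≤
        ENNReal.ofReal (K * (η^2 / max (max (|t-s|^H) η) (dist y z))^d) := by
  have hq1 : (1-a)^(1-H) < 1 := Real.rpow_lt_one (by linarith) (by linarith) (by linarith [hH.2])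
  have hq0 : 0 ≤ (1-a)^(1-H) := Real.rpow_nonneg (by linarith) _
  have ha0 : 0 < a^H := Real.rpow_pos_of_pos ha _
  obtain ⟨K, L, hK, hL, hmain⟩ := fb_pair P d ((1-a)^(1-H)) (a^H) M hq0 hq1 ha0 hM
  refine ⟨(K*L)^d, one_le_pow₀ (one_le_mul_of_one_le_of_one_le hK hL), ?_⟩
  intro s hs t ht hst y z η hy hη hη1
  set ρ := |t-s|^H with hρ
  have hρ0 : 0 < ρ := Real.rpow_pos_of_pos (abs_pos.2 (sub_ne_zero.2 hst.symm)) _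
  have hg := fb_geom a H s t ha hH hs ht hst
  have hs01 : s ∈ Icc (0:ℝ) 1 := ⟨ha.le.trans hs.1, hs.2⟩
  have ht01 : t ∈ Icc (0:ℝ) 1 := ⟨ha.le.trans ht.1, ht.2⟩
  have hBm : ∀ u i, Measurable (fun ω => B ω u i) := by
    intro u i
    exact (EuclideanSpace.proj (𝕜 := ℝ) i).continuous.measurable.comp (hB.meas u)
  set S : Fin d → Set Ω := fun i => {ω | B ω s i ∈ Icc (y i - η) (y i + η) ∧ B ω t i ∈ Icc (z i - η) (z i + η)} with hS
  have hpm := fun i => hmain (fun ω => B ω s i) (fun ω => B ω t i) (hBm s i) (hBm t i) (s^H) (t^H) ρ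
    (Real.rpow_le_rpow ha.le hs.1 hH.1.le) (Real.rpow_le_one hs01.1 hs01.2 hH.1.le)
    (Real.rpow_le_rpow ha.le ht.1 hH.1.le) (Real.rpow_le_one ht01.1 ht01.2 hH.1.le)
    hρ0 hg.1 hg.2 (fun p q => fb_pairlaw P H hH d B hB s t hs01 ht01 i p q) (y i) (z i) η hη hη1 (hy i)
  -- product
  have hprod : P {ω | (∀ i, B ω s i ∈ Icc (y i - η) (y i + η)) ∧ (∀ i, B ω t i ∈ Icc (z i - η) (z i + η))}
      = ∏ i, P (S i) := by
    have hi := hB.indep.comp (β := fun i => (ℝ → ℝ)) (γ := fun _ => ℝ × ℝ) (fun i (g : ℝ → ℝ) => (g s, g t))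
      (fun i => by fun_prop)
    have := hi.measure_inter_preimage_eq_mul Finset.univ
      (sets := fun i => Icc (y i - η) (y i + η) ×ˢ Icc (z i - η) (z i + η))
      (fun i _ => measurableSet_Icc.prod measurableSet_Icc)
    refine Eq.trans ?_ this
    congr 1
    ext ω
    simp only [Finset.mem_univ, iInter_true, mem_iInter, mem_preimage, Function.comp, mem_prod, mem_ofPred_eq]
    exact ⟨fun h i => ⟨h.1 i, h.2 i⟩, fun h => ⟨fun i => (h i).1, fun i => (h i).2⟩⟩
  rw [hprod]
  set D := dist y z with hD
  by_cases hcase : L * max ρ η ≤ D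
  · -- far
    have hmD : max (max ρ η) D = D := by
      apply max_eq_right
      have : 0 ≤ max ρ η := hρ0.le.trans (le_max_left _ _)
      nlinarith
    rw [hmD]
    have hDp : 0 < D := lt_of_lt_of_le (by positivity) hcase
    have : Nonempty (Fin d) := ⟨⟨0, hd⟩⟩
    obtain ⟨i0, hi0⟩ : ∃ i0, D = |y i0 - z i0| := by
      obtain ⟨i0, -, h⟩ := Finset.exists_mem_eq_sup' (Finset.univ_nonempty (α := Fin d)) (fun i => dist (y i) (z i))
      refine ⟨i0, ?_⟩
      rw [← Real.dist_eq, ← h]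
      apply le_antisymm
      · rw [hD]
        rw [dist_pi_le_iff]
        · intro i; exact Finset.le_sup' (fun i => dist (y i) (z i)) (Finset.mem_univ i)
        · rw [h]; exact dist_nonneg
      · rw [h]; exact dist_le_pi_dist y z i0
    have hη' : L * η ≤ |y i0 - z i0| := by
      rw [← hi0]; refine le_trans ?_ hcase; gcongr; exact le_max_right _ _
    have hρ' : L * ρ ≤ |y i0 - z i0| := by
      rw [← hi0]; refine le_trans ?_ hcase; gcongr; exact le_max_left _ _
    have h1 := (hpm i0).2.2 hη' hρ'
    rw [← hi0] at h1
    rw [← Finset.mul_prod_erase Finset.univ _ (Finset.mem_univ i0)]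
    calc P (S i0) * ∏ i ∈ Finset.univ.erase i0, P (S i)
        ≤ ENNReal.ofReal (K * (η^2/ρ) * (ρ/D)^d) * ∏ i ∈ Finset.univ.erase i0, ENNReal.ofReal (K * (η^2/ρ)) := by
          gcongr with i
          exact (hpm i).2.1
      _ = ENNReal.ofReal ((K * (η^2/ρ))^d * (ρ/D)^d) := by
          rw [Finset.prod_const, Finset.card_erase_of_mem (Finset.mem_univ _), Finset.card_univ, Fintype.card_fin,
            ← ENNReal.ofReal_pow (by positivity), ← ENNReal.ofReal_mul (by positivity)]
          congr 1
          have : (K * (η^2/ρ))^d = (K * (η^2/ρ))^(d-1) * (K * (η^2/ρ)) := by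
            rw [← pow_succ, Nat.sub_add_cancel hd]
          rw [this]; ring
      _ ≤ _ := by
          apply ENNReal.ofReal_le_ofReal
          rw [← mul_pow, ← mul_pow]
          have : K * (η^2/ρ) * (ρ/D) = K * (η^2/D) := by field_simp
          rw [this]
          gcongr
          nlinarith
  · push Not at hcase
    set m := max ρ η with hm
    have hmp : 0 < m := lt_of_lt_of_le hρ0 (le_max_left _ _)
    have hS1 : ∀ i, P (S i) ≤ ENNReal.ofReal (K * (η^2/m)) := by
      intro i
      rcases le_total ρ η with h | h
      · rw [hm, max_eq_right h]
        have := (hpm i).1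
        have e : η^2/η = η := by field_simp
        rwa [e]
      · rw [hm, max_eq_left h]; exact (hpm i).2.1
    calc ∏ i, P (S i) ≤ ∏ i : Fin d, ENNReal.ofReal (K * (η^2/m)) := Finset.prod_le_prod' fun i _ => hS1 i
      _ = ENNReal.ofReal ((K * (η^2/m))^d) := by
        rw [Finset.prod_const, Finset.card_univ, Fintype.card_fin, ENNReal.ofReal_pow (by positivity)]
      _ ≤ _ := by
        apply ENNReal.ofReal_le_ofReal
        rw [← mul_pow]
        have h1 : max m D ≤ L * m := max_le (by nlinarith) hcase.le
        have h2 : 0 < max m D := lt_of_lt_of_le hmp (le_max_left _ _)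
        refine pow_le_pow_left₀ (by positivity) ?_ _
        rw [mul_assoc]
        refine mul_le_mul_of_nonneg_left ?_ (by linarith)
        rw [div_le_iff₀ hmp, mul_assoc, div_mul_eq_mul_div, mul_div_assoc', le_div_iff₀ h2]
        nlinarith [mul_le_mul_of_nonneg_left h1 (sq_nonneg η)]

set_option maxHeartbeats 1000000 in
lemma fb_single {Ω : Type*} [MeasurableSpace Ω] (P : Measure Ω) [IsProbabilityMeasure P]
    (H : ℝ) (hH : H ∈ Ioo (0 : ℝ) 1) (d : ℕ)
    (B : Ω → ℝ → EuclideanSpace ℝ (Fin d)) (hB : IsFBM P H d B) (t : ℝ) (ht : t ∈ Icc (0:ℝ) 1)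
    (y : Fin d → ℝ) (η : ℝ) :
    ∃ v : NNReal, (v:ℝ) = (t^H)^2 ∧ P {ω | ∀ i, B ω t i ∈ Icc (y i - η) (y i + η)} =
      ∏ i, gaussianReal 0 v (Icc (y i - η) (y i + η)) := by
  obtain ⟨v, hv⟩ : ∃ v : NNReal, (v:ℝ) = (t^H)^2 := ⟨⟨_, sq_nonneg _⟩, rfl⟩
  refine ⟨v, hv, ?_⟩
  have hBm : ∀ u i, Measurable (fun ω => B ω u i) := by
    intro u i
    exact (EuclideanSpace.proj (𝕜 := ℝ) i).continuous.measurable.comp (hB.meas u)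
  have hi := hB.indep.comp (β := fun i => (ℝ → ℝ)) (γ := fun _ => ℝ) (fun i (g : ℝ → ℝ) => g t)
      (fun i => by fun_prop)
  have := hi.measure_inter_preimage_eq_mul Finset.univ
      (sets := fun i => Icc (y i - η) (y i + η)) (fun i _ => measurableSet_Icc)
  have h2 : ∀ i, P ({ω | B ω t i ∈ Icc (y i - η) (y i + η)}) =
      gaussianReal 0 v (Icc (y i - η) (y i + η)) := by
    intro i
    obtain ⟨v', hv', h⟩ := fb_pairlaw P H hH d B hB t t ht ht i 1 0
    have hvv : v' = v := by
      apply NNReal.coe_injective; rw [hv, hv']; ring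
    rw [← hvv, ← h]
    simp only [one_mul, zero_mul, add_zero]
    rw [Measure.map_apply (hBm t i) measurableSet_Icc]
    rfl
  rw [← Finset.prod_congr rfl (fun i _ => h2 i)]
  refine Eq.trans ?_ this
  congr 1
  ext ω
  simp

lemma fb_single_upper {Ω : Type*} [MeasurableSpace Ω] (P : Measure Ω) [IsProbabilityMeasure P]
    (H : ℝ) (hH : H ∈ Ioo (0 : ℝ) 1) (d : ℕ)
    (B : Ω → ℝ → EuclideanSpace ℝ (Fin d)) (hB : IsFBM P H d B) (a : ℝ) (ha : 0 < a) (t : ℝ) (ht : t ∈ Icc a 1)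
    (y : Fin d → ℝ) (η : ℝ) (hη : 0 ≤ η) :
    P {ω | ∀ i, B ω t i ∈ Icc (y i - η) (y i + η)} ≤ ENNReal.ofReal ((η / a^H)^d) := by
  have ht0 : 0 < t := ha.trans_le ht.1
  have haH : 0 < a^H := Real.rpow_pos_of_pos ha _
  obtain ⟨v, hv, h⟩ := fb_single P H hH d B hB t ⟨ht0.le, ht.2⟩ y η
  have htH : 0 < t^H := Real.rpow_pos_of_pos ht0 _
  have hv0 : v ≠ 0 := by rintro rfl; exact (pow_pos htH 2).ne hv
  have hs : √(v:ℝ) = t^H := by rw [hv, Real.sqrt_sq htH.le]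
  rw [h]
  calc _ ≤ ∏ i : Fin d, ENNReal.ofReal (η / a^H) := by
        apply Finset.prod_le_prod'
        intro i _
        refine (fb_gauss_upper v hv0 _ η hη).trans ?_
        apply ENNReal.ofReal_le_ofReal
        rw [hs]
        have := Real.rpow_le_rpow ha.le ht.1 hH.1.le
        gcongr
    _ = _ := by rw [Finset.prod_const, Finset.card_univ, Fintype.card_fin, ENNReal.ofReal_pow (by positivity)]

lemma fb_single_lower {Ω : Type*} [MeasurableSpace Ω] (P : Measure Ω) [IsProbabilityMeasure P]
    (H : ℝ) (hH : H ∈ Ioo (0 : ℝ) 1) (d : ℕ)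
    (B : Ω → ℝ → EuclideanSpace ℝ (Fin d)) (hB : IsFBM P H d B) (a M : ℝ) (ha : 0 < a) :
    ∃ c : ℝ, 0 < c ∧ ∀ t ∈ Icc a 1, ∀ (y : Fin d → ℝ) (η : ℝ), (∀ i, |y i| ≤ M) → 0 ≤ η → η ≤ 1 →
    ENNReal.ofReal (c * η ^ d) ≤ P {ω | ∀ i, B ω t i ∈ Icc (y i - η) (y i + η)} := by
  have haH : 0 < a^H := Real.rpow_pos_of_pos ha _
  refine ⟨(Real.exp (-(M+1)^2/(2*(a^H)^2)) / 2)^d, by positivity, ?_⟩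
  intro t ht y η hy hη hη1
  have ht0 : 0 < t := ha.trans_le ht.1
  obtain ⟨v, hv, h⟩ := fb_single P H hH d B hB t ⟨ht0.le, ht.2⟩ y η
  have htH : 0 < t^H := Real.rpow_pos_of_pos ht0 _
  have h1 := Real.rpow_le_rpow ha.le ht.1 hH.1.le
  have h2 := Real.rpow_le_one ht0.le ht.2 hH.1.le
  rw [h]
  calc _ = ∏ i : Fin d, ENNReal.ofReal (Real.exp (-(M+1)^2/(2*(a^H)^2)) / 2 * η) := by
        rw [Finset.prod_const, Finset.card_univ, Fintype.card_fin, ← mul_pow, ENNReal.ofReal_pow (by positivity)]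
    _ ≤ _ := by
        apply Finset.prod_le_prod'
        intro i _
        apply fb_gauss_lower v _ M (by positivity) _ _ _ η hη hη1 (hy i)
        · rw [hv]; gcongr
        · rw [hv]; exact pow_le_one₀ htH.le h2

lemma fb_mink {X : Type*} [MetricSpace X] (F : Set X) (hF : IsCompact F)
    (h0 : 0 < upMinkDim (fun x y : X => dist x y) F) (g : ℝ)
    (hg : upMinkDim (fun x y : X => dist x y) F < g) :
    ∃ r0 : ℝ, 0 < r0 ∧ r0 ≤ 1 ∧ ∀ r : ℝ, 0 < r → r < r0 → ∃ s : Finset X,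
      F ⊆ ⋃ x ∈ s, {y | dist y x < r} ∧ (s.card : ℝ) ≤ 2 * r ^ (-g) := by
  have hb : Filter.IsBoundedUnder (· ≤ ·) (nhdsWithin (0:ℝ) (Set.Ioi 0))
      (fun r : ℝ => Real.log (covN (fun x y : X => dist x y) F r).toReal / Real.log (1 / r)) := by
    by_contra hb
    apply h0.ne'
    unfold upMinkDim
    rw [Filter.limsup_eq]
    have he : {x : ℝ | ∀ᶠ r in nhdsWithin (0:ℝ) (Set.Ioi 0),
        Real.log (covN (fun x y : X => dist x y) F r).toReal / Real.log (1 / r) ≤ x} = ∅ := by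
      ext x
      simp only [mem_ofPred_eq, mem_empty_iff_false, iff_false]
      intro hx
      exact hb ⟨x, by simpa using hx⟩
    rw [he, Real.sInf_empty]
  have hev := Filter.eventually_lt_of_limsup_lt hg hb
  rw [eventually_nhdsWithin_iff, Metric.eventually_nhds_iff] at hev
  obtain ⟨ε, hε, h⟩ := hev
  refine ⟨min ε 1, by positivity, min_le_right _ _, ?_⟩
  intro r hr hr0
  have hr1 : r < 1 := hr0.trans_le (min_le_right _ _)
  have hN := @h r (by simp [abs_of_pos hr]; exact hr0.trans_le (min_le_left _ _)) hr
  have hlog : 0 < Real.log (1 / r) := Real.log_pos (by rw [lt_div_iff₀ hr]; simpa using hr1)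
  rw [div_lt_iff₀ hlog] at hN
  set N := covN (fun x y : X => dist x y) F r with hNdef
  have hfin : N < ∞ := by
    obtain ⟨t, ht⟩ := hF.elim_finite_subcover (fun x : X => Metric.ball x r) (fun x => Metric.isOpen_ball)
      (fun x _ => mem_iUnion.2 ⟨x, Metric.mem_ball_self hr⟩)
    refine lt_of_le_of_lt (iInf₂_le t ?_) (ENNReal.natCast_lt_top t.card)
    exact ht
  have hlt : N < N + 1 := ENNReal.lt_add_right hfin.ne one_ne_zero
  rw [hNdef] at hlt
  nth_rw 1 [covN] at hlt
  rw [iInf_lt_iff] at hlt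
  obtain ⟨s, hs⟩ := hlt
  rw [iInf_lt_iff] at hs
  obtain ⟨hs1, hs2⟩ := hs
  refine ⟨s, hs1, ?_⟩
  rw [← hNdef] at hs2
  have h3 : (s.card : ℝ) ≤ N.toReal + 1 := by
    have := ENNReal.toReal_mono (by simp [hfin.ne]) hs2.le
    rw [ENNReal.toReal_add hfin.ne (by simp)] at this
    simpa using this
  have hgpos : 0 < g := h0.trans hg
  have h4 : 1 ≤ r ^ (-g) := Real.one_le_rpow_of_pos_of_le_one_of_nonpos hr hr1.le (by linarith)
  have h5 : N.toReal ≤ r ^ (-g) := by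
    rcases (ENNReal.toReal_nonneg (a := N)).eq_or_lt with h | h
    · rw [← h]; positivity
    · rw [← Real.log_le_log_iff h (by positivity), Real.log_rpow hr]
      rw [one_div, Real.log_inv] at hN
      linarith
  linarith

lemma fb_chain (g : ℝ → ℝ) (hg : ContinuousOn g (Icc 0 1)) (δ : ℝ) (hδ0 : 0 < δ) (hδ1 : δ < 1) (N : ℕ)
    (h : ∀ n, N ≤ n → ∀ k : ℕ, k < 2^n → |g ((k+1:ℝ)/2^n) - g ((k:ℝ)/2^n)| ≤ δ^n) :
    ∀ n, N ≤ n → ∀ s ∈ Icc (0:ℝ) 1, ∀ t ∈ Icc (0:ℝ) 1, |s - t| ≤ (1/2)^n →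
      |g s - g t| ≤ (1 + 2/(1-δ)) * δ^n := by
  have h1δ : 0 < 1 - δ := by linarith
  set τ : ℕ → ℝ → ℝ := fun n t => (⌊2^n * t⌋₊ : ℝ) / 2^n with hτ
  have hmem : ∀ n, ∀ t ∈ Icc (0:ℝ) 1, τ n t ∈ Icc (0:ℝ) 1 := by
    intro n t ht
    have : (⌊2^n * t⌋₊ : ℝ) ≤ 2^n * t := Nat.floor_le (by have := ht.1; positivity)
    refine ⟨by positivity, ?_⟩
    rw [hτ]; simp only
    rw [div_le_one (by positivity)]
    nlinarith [ht.2, pow_pos (two_pos (α := ℝ)) n]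
  have hstep : ∀ m, N ≤ m + 1 → ∀ t ∈ Icc (0:ℝ) 1, |g (τ (m+1) t) - g (τ m t)| ≤ δ^(m+1) := by
    intro m hm t ht
    have hpos : (0:ℝ) < 2^m := by positivity
    set k := ⌊2^m * t⌋₊ with hk
    have hk1 : (k:ℝ) ≤ 2^m * t := Nat.floor_le (by have := ht.1; positivity)
    have hk2 : 2^m * t < k + 1 := Nat.lt_floor_add_one _
    have hl1 : 2 * k ≤ ⌊2^(m+1) * t⌋₊ := by
      apply Nat.le_floor
      push_cast; rw [pow_succ]; linarith
    have hl2 : ⌊2^(m+1) * t⌋₊ < 2 * k + 2 := by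
      rw [Nat.floor_lt (by have := ht.1; positivity)]
      push_cast; rw [pow_succ]; linarith
    have e1 : τ m t = ((2*k : ℕ):ℝ) / 2^(m+1) := by
      rw [hτ]; simp only; rw [← hk]; push_cast; rw [pow_succ]; field_simp
    rcases (show ⌊2^(m+1) * t⌋₊ = 2*k ∨ ⌊2^(m+1) * t⌋₊ = 2*k+1 by omega) with h' | h'
    · have e2 : τ (m+1) t = τ m t := by rw [e1, hτ]; simp only; rw [h']
      rw [e2]; simp; positivity
    · have e2 : τ (m+1) t = (((2*k : ℕ):ℝ)+1) / 2^(m+1) := by rw [hτ]; simp only; rw [h']; push_cast; rfl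
      rw [e1, e2]
      apply h _ hm
      have : ((2*k+1:ℕ):ℝ) ≤ 2^(m+1) := by
        have h3 : ((2*k+1:ℕ):ℝ) ≤ 2^(m+1) * t := by
          rw [← h']; exact Nat.floor_le (by have := ht.1; positivity)
        have : (0:ℝ) < 2^(m+1) := by positivity
        nlinarith [ht.2]
      have : 2*k+1 ≤ 2^(m+1) := by exact_mod_cast this
      omega
  have hsum : ∀ n, N ≤ n → ∀ t ∈ Icc (0:ℝ) 1, ∀ m, |g (τ (n+m) t) - g (τ n t)| ≤ (δ^n - δ^(n+m))/(1-δ) := by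
    intro n hn t ht m
    induction m with
    | zero => simp
    | succ m ih =>
      have h1 := hstep (n+m) (by omega) t ht
      have h2 : δ^(n+m+1) ≤ (δ^(n+m) - δ^(n+m+1))/(1-δ) := by
        rw [le_div_iff₀ h1δ, pow_succ]
        nlinarith [mul_pos (pow_pos hδ0 (n+m)) (mul_pos h1δ h1δ), mul_pos (pow_pos hδ0 (n+m)) h1δ]
      calc |g (τ (n+(m+1)) t) - g (τ n t)| ≤ |g (τ (n+m+1) t) - g (τ (n+m) t)| + |g (τ (n+m) t) - g (τ n t)| :=
            abs_sub_le _ _ _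
        _ ≤ (δ^(n+m) - δ^(n+m+1))/(1-δ) + (δ^n - δ^(n+m))/(1-δ) := add_le_add (h1.trans h2) ih
        _ = _ := by rw [← add_div]; congr 1; rw [← add_assoc]; ring
  have hlimτ : ∀ t ∈ Icc (0:ℝ) 1, Filter.Tendsto (fun n => τ n t) Filter.atTop (nhds t) := by
    intro t ht
    rw [tendsto_iff_dist_tendsto_zero]
    apply squeeze_zero (fun _ => dist_nonneg) (g := fun n : ℕ => ((1:ℝ)/2)^n)
    · intro n
      have hpos : (0:ℝ) < 2^n := by positivity
      have hk1 : (⌊2^n * t⌋₊:ℝ) ≤ 2^n * t := Nat.floor_le (by have := ht.1; positivity)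
      have hk2 : 2^n * t < ⌊2^n * t⌋₊ + 1 := Nat.lt_floor_add_one _
      rw [Real.dist_eq, abs_le, one_div, inv_pow, ← one_div]
      have e : τ n t - t = (⌊2^n * t⌋₊ - 2^n * t) / 2^n := by rw [hτ]; field_simp
      rw [e]
      constructor
      · rw [← neg_div]; gcongr; linarith
      · gcongr; linarith
    · exact tendsto_pow_atTop_nhds_zero_of_lt_one (by norm_num) (by norm_num)
  have hlim : ∀ n, N ≤ n → ∀ t ∈ Icc (0:ℝ) 1, |g t - g (τ n t)| ≤ δ^n/(1-δ) := by
    intro n hn t ht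
    have h1 : Filter.Tendsto (fun m => |g (τ m t) - g (τ n t)|) Filter.atTop (nhds (|g t - g (τ n t)|)) := by
      have : Filter.Tendsto (fun m => g (τ m t)) Filter.atTop (nhds (g t)) := by
        apply (hg t ht).tendsto.comp
        rw [tendsto_nhdsWithin_iff]
        exact ⟨hlimτ t ht, Filter.Eventually.of_forall fun n => hmem n t ht⟩
      exact (this.sub_const _).abs
    apply le_of_tendsto h1
    filter_upwards [Filter.eventually_ge_atTop n] with m hm
    obtain ⟨j, rfl⟩ := Nat.exists_eq_add_of_le hm
    refine (hsum n hn t ht j).trans ?_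
    gcongr
    have := pow_pos hδ0 (n+j)
    linarith
  intro n hn s hs t ht hst
  have hmid : ∀ s ∈ Icc (0:ℝ) 1, ∀ t ∈ Icc (0:ℝ) 1, s ≤ t → t - s ≤ (1/2)^n → |g (τ n t) - g (τ n s)| ≤ δ^n := by
    intro s hs t ht hle hst
    have hpos : (0:ℝ) < 2^n := by positivity
    have h1 : 2^n * t ≤ 2^n * s + 1 := by
      have : (2:ℝ)^n * (1/2)^n = 1 := by rw [← mul_pow]; norm_num
      nlinarith
    have h2 : ⌊2^n * s⌋₊ ≤ ⌊2^n * t⌋₊ := Nat.floor_mono (by gcongr)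
    have h3 : ⌊2^n * t⌋₊ ≤ ⌊2^n * s⌋₊ + 1 := by
      have := Nat.floor_mono h1
      rwa [Nat.floor_add_one (by have := hs.1; positivity)] at this
    rcases (show ⌊2^n * t⌋₊ = ⌊2^n * s⌋₊ ∨ ⌊2^n * t⌋₊ = ⌊2^n * s⌋₊ + 1 by omega) with h' | h'
    · rw [hτ]; simp only; rw [h']; simp; positivity
    · rw [hτ]; simp only; rw [h']; push_cast
      apply h n hn
      have h3 : ((⌊2^n * s⌋₊+1:ℕ):ℝ) ≤ 2^n * t := by
        rw [← h']; exact Nat.floor_le (by have := ht.1; positivity)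
      have : ((⌊2^n * s⌋₊+1:ℕ):ℝ) ≤ 2^n := by nlinarith [ht.2]
      have : ⌊2^n * s⌋₊+1 ≤ 2^n := by exact_mod_cast this
      omega
  have hmid' : |g (τ n s) - g (τ n t)| ≤ δ^n := by
    rcases le_total s t with h' | h'
    · rw [abs_sub_comm]; exact hmid s hs t ht h' ((le_abs_self _).trans (by rwa [abs_sub_comm]))
    · exact hmid t ht s hs h' ((le_abs_self _).trans hst)
  have ha := hlim n hn s hs
  have hb := hlim n hn t ht
  have h1 := abs_sub_le (g s) (g (τ n s)) (g t)
  have h2 := abs_sub_le (g (τ n s)) (g (τ n t)) (g t)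
  rw [abs_sub_comm (g (τ n t))] at h2
  calc _ ≤ δ^n/(1-δ) + (δ^n + δ^n/(1-δ)) := by linarith
    _ = _ := by ring

lemma fb_tail (v : NNReal) (hv : v ≠ 0) (l : ℝ) (hl : 0 ≤ l) :
    gaussianReal 0 v {x | l ≤ |x|} ≤ ENNReal.ofReal (2 * Real.exp (-(l^2/(2*v)))) := by
  have hv' : (v:ℝ) ≠ 0 := by exact_mod_cast hv
  have h1 : (gaussianReal 0 v).real {x | l ≤ id x} ≤ Real.exp (-(l^2/(2*v))) := by
    refine (measure_ge_le_exp_mul_mgf (t := l/v) l (by positivity) (integrable_exp_mul_gaussianReal _)).trans ?_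
    change _ * mgf id (gaussianReal 0 v) _ ≤ _
    rw [mgf_id_gaussianReal, ← Real.exp_add]
    apply le_of_eq; congr 1
    field_simp; ring
  have h2 : (gaussianReal 0 v).real {x | id x ≤ -l} ≤ Real.exp (-(l^2/(2*v))) := by
    refine (measure_le_le_exp_mul_mgf (t := -(l/v)) (-l) (by simp; positivity) (integrable_exp_mul_gaussianReal _)).trans ?_
    change _ * mgf id (gaussianReal 0 v) _ ≤ _
    rw [mgf_id_gaussianReal, ← Real.exp_add]
    apply le_of_eq; congr 1
    field_simp; ring
  have h3 : {x : ℝ | l ≤ |x|} ⊆ {x | l ≤ id x} ∪ {x | id x ≤ -l} := by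
    intro x hx
    rw [mem_ofPred_eq] at hx
    rcases le_abs.1 hx with h | h
    · exact Or.inl h
    · right; simp only [mem_ofPred_eq, id]; linarith
  calc _ ≤ gaussianReal 0 v ({x | l ≤ id x} ∪ {x | id x ≤ -l}) := measure_mono h3
    _ ≤ _ := measure_union_le _ _
    _ = ENNReal.ofReal ((gaussianReal 0 v).real {x | l ≤ id x} + (gaussianReal 0 v).real {x | id x ≤ -l}) := by
      rw [ENNReal.ofReal_add (by positivity) (by positivity)]
      simp
    _ ≤ _ := ENNReal.ofReal_le_ofReal (by linarith)

lemma fb_incr {Ω : Type*} [MeasurableSpace Ω] (P : Measure Ω) [IsProbabilityMeasure P]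
    (H : ℝ) (hH : H ∈ Ioo (0 : ℝ) 1) (d : ℕ)
    (B : Ω → ℝ → EuclideanSpace ℝ (Fin d)) (hB : IsFBM P H d B) (s t : ℝ) (hs : s ∈ Icc (0:ℝ) 1)
    (ht : t ∈ Icc (0:ℝ) 1) (hst : s ≠ t) (i : Fin d) (l : ℝ) (hl : 0 ≤ l) :
    P {ω | l ≤ |B ω t i - B ω s i|} ≤ ENNReal.ofReal (2 * Real.exp (-(l^2/(2*(|t-s|^H)^2)))) := by
  obtain ⟨v, hv, h⟩ := fb_pairlaw P H hH d B hB s t hs ht i (-1) 1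
  have hBm : ∀ u i, Measurable (fun ω => B ω u i) := by
    intro u i
    exact (EuclideanSpace.proj (𝕜 := ℝ) i).continuous.measurable.comp (hB.meas u)
  have hv2 : (v:ℝ) = (|t-s|^H)^2 := by rw [hv]; ring
  have hpos : 0 < |t-s|^H := Real.rpow_pos_of_pos (abs_pos.2 (sub_ne_zero.2 hst.symm)) _
  have hv0 : v ≠ 0 := by rintro rfl; exact (pow_pos hpos 2).ne hv2
  rw [← hv2]
  refine le_trans (le_of_eq ?_) (fb_tail v hv0 l hl)
  rw [← h]
  have e : (fun ω => -1 * B ω s i + 1 * B ω t i) = fun ω => B ω t i - B ω s i := by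
    funext ω; ring
  have hm : Measurable (fun ω => B ω t i - B ω s i) := (hBm t i).sub (hBm s i)
  have hm2 : MeasurableSet {x : ℝ | l ≤ |x|} := measurableSet_le measurable_const measurable_id.abs
  rw [e, Measure.map_apply hm hm2]
  rfl

lemma fb_summ (c : ℝ) (hc : 1 < c) (C : ℝ) :
    ∃ K : ℝ, ∀ n : ℕ, (2:ℝ)^n * (C * (2 * Real.exp (-(c^n/2)))) ≤ |C| * K * (1/2)^n := by
  obtain ⟨m, hm⟩ := pow_unbounded_of_one_lt (4:ℝ) hc
  refine ⟨2 * (m.factorial * 2^m), fun n => ?_⟩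
  have hcn : 0 < c^n := by positivity
  have h1 : (c^n/2)^m / m.factorial ≤ Real.exp (c^n/2) :=
    Real.pow_div_factorial_le_exp _ (by positivity) m
  have h4 : (4:ℝ)^n ≤ (c^n)^m := by
    rw [← pow_mul, mul_comm, pow_mul]; gcongr
  have hf : (0:ℝ) < m.factorial := by exact_mod_cast Nat.factorial_pos m
  have h5 : Real.exp (-(c^n/2)) ≤ m.factorial * 2^m * (1/4)^n := by
    rw [Real.exp_neg]
    have : (4:ℝ)^n / 2^m / m.factorial ≤ Real.exp (c^n/2) := by
      refine le_trans ?_ h1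
      rw [div_pow]; gcongr
    have h6 : (0:ℝ) < (4:ℝ)^n / 2^m / m.factorial := by positivity
    refine (inv_anti₀ h6 this).trans (le_of_eq ?_)
    rw [one_div, inv_pow]; field_simp
  have h7 : (2:ℝ)^n * (1/4)^n = (1/2)^n := by rw [← mul_pow]; norm_num
  calc (2:ℝ)^n * (C * (2 * Real.exp (-(c^n/2)))) ≤ (2:ℝ)^n * (|C| * (2 * (m.factorial * 2^m * (1/4)^n))) := by
        gcongr; exact le_abs_self _
    _ = |C| * (2 * (m.factorial * 2^m)) * ((2:ℝ)^n * (1/4)^n) := by ring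
    _ = _ := by rw [h7]

lemma fb_holder {Ω : Type*} [MeasurableSpace Ω] (P : Measure Ω) [IsProbabilityMeasure P]
    (H : ℝ) (hH : H ∈ Ioo (0 : ℝ) 1) (d : ℕ)
    (B : Ω → ℝ → EuclideanSpace ℝ (Fin d)) (hB : IsFBM P H d B) (θ : ℝ) (hθ : 0 < θ) (hθH : θ < H) :
    ∃ C : ℝ, 0 < C ∧ ∀ᵐ ω ∂P, ∃ N : ℕ, ∀ n, N ≤ n → ∀ s ∈ Icc (0:ℝ) 1, ∀ t ∈ Icc (0:ℝ) 1, |s - t| ≤ (1/2)^n →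
      ∀ i, |B ω s i - B ω t i| ≤ C * ((1/2)^n)^θ := by
  set δ : ℝ := (1/2)^θ with hδ
  have hδ0 : 0 < δ := by positivity
  have hδ1 : δ < 1 := Real.rpow_lt_one (by norm_num) (by norm_num) hθ
  have hδn : ∀ n : ℕ, δ^n = ((1/2:ℝ)^n)^θ := by
    intro n; rw [hδ, ← Real.rpow_natCast, ← Real.rpow_natCast, ← Real.rpow_mul (by norm_num), ← Real.rpow_mul (by norm_num), mul_comm]
  refine ⟨1 + 2/(1-δ), by have : 0 < 1 - δ := by linarith
                          positivity, ?_⟩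
  set A : ℕ → Set Ω := fun n => ⋃ k ∈ Finset.range (2^n), ⋃ i : Fin d, {ω | δ^n ≤ |B ω ((k+1:ℝ)/2^n) i - B ω ((k:ℝ)/2^n) i|} with hA
  set e : ℝ := (1/2)^H with he
  have he0 : 0 < e := by positivity
  have hen : ∀ n : ℕ, e^n = ((1/2:ℝ)^n)^H := by
    intro n; rw [he, ← Real.rpow_natCast, ← Real.rpow_natCast, ← Real.rpow_mul (by norm_num), ← Real.rpow_mul (by norm_num), mul_comm]
  set c : ℝ := (δ/e)^2 with hc
  have hc1 : 1 < c := by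
    apply one_lt_pow₀ _ two_ne_zero
    rw [one_lt_div he0]
    exact Real.rpow_lt_rpow_of_exponent_gt (by norm_num) (by norm_num) hθH
  obtain ⟨K, hK⟩ := fb_summ c hc1 d
  have hAn : ∀ n, P (A n) ≤ ENNReal.ofReal (|(d:ℝ)| * K * (1/2)^n) := by
    intro n
    refine le_trans ?_ (ENNReal.ofReal_le_ofReal (hK n))
    calc P (A n) ≤ ∑ k ∈ Finset.range (2^n), P (⋃ i : Fin d, {ω | δ^n ≤ |B ω ((k+1:ℝ)/2^n) i - B ω ((k:ℝ)/2^n) i|}) :=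
          measure_biUnion_finset_le _ _
      _ ≤ ∑ k ∈ Finset.range (2^n), ∑ i : Fin d, P {ω | δ^n ≤ |B ω ((k+1:ℝ)/2^n) i - B ω ((k:ℝ)/2^n) i|} := by
          gcongr with k hk
          exact measure_iUnion_fintype_le _ _
      _ ≤ ∑ k ∈ Finset.range (2^n), ∑ i : Fin d, ENNReal.ofReal (2 * Real.exp (-(c^n/2))) := by
          gcongr with k hk i hi
          have hk' : (k:ℝ) + 1 ≤ 2^n := by
            have : k + 1 ≤ 2^n := Finset.mem_range.1 hk
            exact_mod_cast this
          have hp : (0:ℝ) < 2^n := by positivity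
          have hd : ((k+1:ℝ)/2^n) - ((k:ℝ)/2^n) = (1/2)^n := by
            rw [← sub_div, one_div, inv_pow]; simp
          have hp2 : (0:ℝ) < (1/2)^n := by positivity
          refine (fb_incr P H hH d B hB ((k:ℝ)/2^n) ((k+1:ℝ)/2^n) ⟨by positivity, ?_⟩ ⟨by positivity, ?_⟩ ?_ i _ (by positivity)).trans (le_of_eq ?_)
          · rw [div_le_one hp]; linarith
          · rw [div_le_one hp]; linarith
          · intro h; rw [h] at hd; simp at hd; linarith
          · rw [hd, abs_of_pos hp2, ← hen]
            have : (δ^n)^2 / (2 * (e^n)^2) = c^n/2 := by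
              rw [hc, ← pow_mul, ← pow_mul, ← pow_mul, mul_comm 2 n, div_pow]
              field_simp
            rw [this]
      _ = _ := by
          rw [Finset.sum_const, Finset.sum_const, Finset.card_range, Finset.card_univ, Fintype.card_fin]
          rw [nsmul_eq_mul, nsmul_eq_mul, ENNReal.ofReal_mul (p := 2^n) (by positivity), ENNReal.ofReal_mul (p := (d:ℝ)) (by positivity), ENNReal.ofReal_natCast,
            ENNReal.ofReal_pow (by norm_num)]
          simp
  have hsum : ∑' n, P (A n) ≠ ∞ := by
    have hK0 : 0 ≤ |(d:ℝ)| * K := by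
      have := (show (0:ℝ) ≤ _ by positivity).trans (hK 0)
      simpa using this
    refine ne_top_of_le_ne_top ?_ (ENNReal.tsum_le_tsum hAn)
    rw [← ENNReal.ofReal_tsum_of_nonneg]
    · exact ENNReal.ofReal_ne_top
    · intro n; positivity
    · exact (summable_geometric_of_lt_one (by norm_num) (by norm_num)).mul_left _
  have hbc := ae_eventually_notMem hsum
  filter_upwards [hbc] with ω hω
  obtain ⟨N, hN⟩ := Filter.eventually_atTop.1 hω
  refine ⟨N, ?_⟩
  intro n hn s hs t ht hst i
  rw [← hδn]
  refine fb_chain (fun t => B ω t i) ?_ δ hδ0 hδ1 N ?_ n hn s hs t ht hst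
  · exact (EuclideanSpace.proj (𝕜 := ℝ) i).continuous.comp_continuousOn (hB.cont ω)
  · intro m hm k hk
    have := hN m hm
    simp only [hA, mem_iUnion, not_exists] at this
    have := this k (Finset.mem_range.2 hk) i
    simp only [mem_ofPred_eq, not_le] at this
    exact this.le

set_option maxHeartbeats 1000000 in
lemma fb_upper_local {Ω : Type*} [MeasurableSpace Ω] (P : Measure Ω) [IsProbabilityMeasure P]
    (H : ℝ) (hH : H ∈ Ioo (0 : ℝ) 1) (d : ℕ)
    (B : Ω → ℝ → EuclideanSpace ℝ (Fin d)) (hB : IsFBM P H d B)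
    (a b : ℝ) (ha : 0 < a) (hb : b ≤ 1)
    (f : ℝ → EuclideanSpace ℝ (Fin d)) (K : ℝ) (hK : 0 ≤ K)
    (hf : ∀ x ∈ Icc a b, ∀ y ∈ Icc a b, ‖f x - f y‖ ≤ K * |x - y| ^ H)
    (E : Set ℝ) (hEI : E ⊆ Set.Icc a b)
    (F : Set (EuclideanSpace ℝ (Fin d))) (g g' : ℝ) (hgg : g < g') (hg'd : g' < d) 
    (r0 : ℝ) (hr0 : 0 < r0) 
    (hcov : ∀ r : ℝ, 0 < r → r < r0 → ∃ s : Finset (EuclideanSpace ℝ (Fin d)),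
      F ⊆ ⋃ x ∈ s, {y | dist y x < r} ∧ (s.card : ℝ) ≤ 2 * r ^ (-g))
    (C θ : ℝ) (hC : 0 < C) (hθ : 0 < θ) (hθH : θ < H) (hθe : θ * (d - g) = H * (d - g')) (N : ℕ) :
    ∃ C3 : ℝ, 0 < C3 ∧ ∃ δ : ℝ, 0 < δ ∧ ∀ c r : ℝ, 0 < r → r ≤ δ →
      P {ω | (∀ n, N ≤ n → ∀ s ∈ Icc (0:ℝ) 1, ∀ t ∈ Icc (0:ℝ) 1, |s - t| ≤ (1/2)^n →
      ∀ i, |B ω s i - B ω t i| ≤ C * ((1/2)^n)^θ) ∧ ∃ t ∈ E, dist t c < r ∧ B ω t + f t ∈ F} ≤ 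
      ENNReal.ofReal C3 * ENNReal.ofReal ((2*r)^(H * (d - g'))) := by
  have haH : 0 < a^H := Real.rpow_pos_of_pos ha _
  set D := C + K with hD
  have hD0 : 0 < D := by positivity
  refine ⟨2 * (2 / a^H)^d * D^((d:ℝ)-g) * 2^(H * (d - g')), by positivity, ?_⟩
  obtain ⟨δ1, hδ1, hδ1'⟩ : ∃ δ1 : ℝ, 0 < δ1 ∧ ∀ r, 0 < r → r ≤ δ1 → D * (4*r)^θ < r0 := by
    have hcont : Filter.Tendsto (fun r : ℝ => D * (4*r)^θ) (nhds 0) (nhds (D * (4*0)^θ)) := by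
      apply Filter.Tendsto.const_mul
      apply Filter.Tendsto.rpow_const
      · exact (continuous_const.mul continuous_id).tendsto _
      · right; exact hθ.le
    rw [mul_zero, Real.zero_rpow hθ.ne', mul_zero] at hcont
    have := hcont.eventually (gt_mem_nhds hr0)
    rw [Metric.eventually_nhds_iff] at this
    obtain ⟨ε, hε, h⟩ := this
    refine ⟨ε/2, by positivity, fun r hr hr2 => h ?_⟩
    rw [Real.dist_eq, sub_zero, abs_of_pos hr]; linarith
  refine ⟨min δ1 (min (1/4) ((1/2)^N/2)), by positivity, ?_⟩
  intro c r hr hrδ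
  have hr1 : r ≤ δ1 := hrδ.trans (min_le_left _ _)
  have hr2 : r ≤ 1/4 := hrδ.trans ((min_le_right _ _).trans (min_le_left _ _))
  have hr3 : r ≤ (1/2)^N/2 := hrδ.trans ((min_le_right _ _).trans (min_le_right _ _))
  by_cases hex : ∃ t0 ∈ E, dist t0 c < r
  swap
  · push Not at hex
    refine le_trans (le_of_eq ?_) zero_le
    convert measure_empty (μ := P)
    ext ω
    simp only [mem_ofPred_eq, mem_empty_iff_false, iff_false]
    rintro ⟨_, t, ht, ht2, _⟩
    exact absurd ht2 (not_lt.2 (hex t ht))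
  obtain ⟨t0, ht0, ht0c⟩ := hex
  have hIcc : ∀ t ∈ E, t ∈ Icc (0:ℝ) 1 := fun t ht => ⟨ha.le.trans (hEI ht).1, (hEI ht).2.trans hb⟩
  obtain ⟨n, hn1, hn2⟩ := exists_nat_pow_near_of_lt_one (x := 2*r) (y := (1/2:ℝ)) (by positivity) (by linarith) (by norm_num) (by norm_num)
  have hNn : N ≤ n := by
    by_contra hlt
    push Not at hlt
    have : (1/2:ℝ)^N ≤ (1/2)^(n+1) := pow_le_pow_of_le_one (by norm_num) (by norm_num) hlt
    linarith
  set η := D * (4*r)^θ with hη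
  have hη0 : 0 < η := by positivity
  obtain ⟨s, hs1, hs2⟩ := hcov η hη0 (hδ1' r hr hr1)
  have hsub : {ω | (∀ n, N ≤ n → ∀ s ∈ Icc (0:ℝ) 1, ∀ t ∈ Icc (0:ℝ) 1, |s - t| ≤ (1/2)^n →
      ∀ i, |B ω s i - B ω t i| ≤ C * ((1/2)^n)^θ) ∧ ∃ t ∈ E, dist t c < r ∧ B ω t + f t ∈ F} ⊆
      ⋃ x ∈ s, {ω | ∀ i, B ω t0 i ∈ Icc ((x i - f t0 i) - 2*η) ((x i - f t0 i) + 2*η)} := by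
    rintro ω ⟨hω, t, ht, htc, htF⟩
    obtain ⟨x, hx, hxt⟩ := mem_iUnion₂.1 (hs1 htF)
    rw [mem_ofPred_eq] at hxt
    refine mem_iUnion₂.2 ⟨x, hx, ?_⟩
    rw [mem_ofPred_eq]
    intro i
    have htt : |t0 - t| ≤ 2*r := by
      rw [← Real.dist_eq]
      have := dist_triangle_right t0 t c
      linarith
    have h1 := hω n hNn t0 (hIcc t0 ht0) t (hIcc t ht) (htt.trans hn2) i
    have hp : ((1/2:ℝ)^n)^θ ≤ (4*r)^θ := by
      apply Real.rpow_le_rpow (by positivity) _ hθ.le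
      rw [pow_succ] at hn1; linarith
    have h2 : |f t0 i - f t i| ≤ K * (4*r)^θ := by
      have h3 := hf t0 (hEI ht0) t (hEI ht)
      have h4 : |f t0 i - f t i| ≤ ‖f t0 - f t‖ := by
        simpa using PiLp.norm_apply_le (f t0 - f t) i
      refine h4.trans (h3.trans ?_)
      apply mul_le_mul_of_nonneg_left _ hK
      calc |t0 - t|^H ≤ (4*r)^H := Real.rpow_le_rpow (abs_nonneg _) (by linarith) hH.1.le
        _ ≤ (4*r)^θ := Real.rpow_le_rpow_of_exponent_ge (by positivity) (by linarith) hθH.le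
    have h5 : |(B ω t + f t) i - x i| ≤ η := by
      have h4 : |(B ω t + f t) i - x i| ≤ ‖(B ω t + f t) - x‖ := by
        simpa using PiLp.norm_apply_le ((B ω t + f t) - x) i
      refine h4.trans ?_
      rw [← dist_eq_norm]; exact hxt.le
    have h6 : |B ω t0 i - B ω t i| + |f t0 i - f t i| ≤ η := by
      rw [hη, hD, add_mul]
      exact add_le_add (h1.trans (mul_le_mul_of_nonneg_left hp hC.le)) h2
    simp only [PiLp.add_apply] at h5
    have h7 := abs_le.1 h5
    have h8 := abs_le.1 (le_refl |B ω t0 i - B ω t i|)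
    have h9 := abs_le.1 (le_refl |f t0 i - f t i|)
    constructor <;> linarith [h7.1, h7.2, h8.1, h8.2, h9.1, h9.2]
  have ht0' : t0 ∈ Icc a 1 := ⟨(hEI ht0).1, (hEI ht0).2.trans hb⟩
  calc _ ≤ P (⋃ x ∈ s, {ω | ∀ i, B ω t0 i ∈ Icc ((x i - f t0 i) - 2*η) ((x i - f t0 i) + 2*η)}) := measure_mono hsub
    _ ≤ ∑ x ∈ s, P {ω | ∀ i, B ω t0 i ∈ Icc ((x i - f t0 i) - 2*η) ((x i - f t0 i) + 2*η)} := measure_biUnion_finset_le _ _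
    _ ≤ ∑ x ∈ s, ENNReal.ofReal ((2*η/a^H)^d) := Finset.sum_le_sum fun x _ =>
      fb_single_upper P H hH d B hB a ha t0 ht0' (fun i => x i - f t0 i) (2*η) (by positivity)
    _ = ENNReal.ofReal (s.card * (2*η/a^H)^d) := by
      rw [Finset.sum_const, nsmul_eq_mul, ENNReal.ofReal_mul (by positivity), ENNReal.ofReal_natCast]
    _ ≤ ENNReal.ofReal (2 * η^(-g) * (2*η/a^H)^d) := by
      apply ENNReal.ofReal_le_ofReal; gcongr
    _ = ENNReal.ofReal (2 * (2 / a^H)^d * D^((d:ℝ)-g) * 2^(H * (d - g')) * (2*r)^(H * (d - g'))) := by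
      congr 1
      have e1 : (2*η/a^H)^d = (2/a^H)^d * η^(d:ℝ) := by
        rw [Real.rpow_natCast, ← mul_pow]; ring
      have e2 : η^(-g) * η^(d:ℝ) = D^((d:ℝ)-g) * (2^(H * (d - g')) * (2*r)^(H * (d - g'))) := by
        rw [← Real.rpow_add hη0, hη, Real.mul_rpow hD0.le (by positivity), ← Real.rpow_mul (by positivity),
          show θ * (-g + d) = H * (d - g') by rw [← hθe]; ring, ← Real.mul_rpow (by norm_num) (by positivity)]
        congr 1
        · congr 1; ring
        · congr 1; ring
      rw [e1]
      calc _ = 2 * (2/a^H)^d * (η^(-g) * η^(d:ℝ)) := by ring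
        _ = _ := by rw [e2]; ring
    _ = _ := by rw [ENNReal.ofReal_mul (by positivity)]

lemma fb_upper {Ω : Type*} [MeasurableSpace Ω] (P : Measure Ω) [IsProbabilityMeasure P]
    (H : ℝ) (hH : H ∈ Ioo (0 : ℝ) 1) (d : ℕ)
    (B : Ω → ℝ → EuclideanSpace ℝ (Fin d)) (hB : IsFBM P H d B)
    (a b : ℝ) (ha : 0 < a) (hb : b ≤ 1)
    (f : ℝ → EuclideanSpace ℝ (Fin d)) (hf : HolderWithExp f H (Set.Icc a b))
    (E : Set ℝ) (hEI : E ⊆ Set.Icc a b)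
    (F : Set (EuclideanSpace ℝ (Fin d))) (hF : IsCompact F)
    (h0 : 0 < upMinkDim (fun x y : EuclideanSpace ℝ (Fin d) => dist x y) F) (g' : ℝ)
    (hg : upMinkDim (fun x y : EuclideanSpace ℝ (Fin d) => dist x y) F < g') (hg'd : g' < d)
    (hE0 : hMeasure (fun x y : ℝ => dist x y) (H * (d - g')) E = 0) :
    P {ω | ∃ t ∈ E, B ω t + f t ∈ F} = 0 := by
  obtain ⟨g, hg1, hgg⟩ := exists_between hg
  obtain ⟨r0, hr0, -, hcov⟩ := fb_mink F hF h0 g hg1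
  obtain ⟨K', hK'⟩ := hf
  have hf : ∀ x ∈ Icc a b, ∀ y ∈ Icc a b, ‖f x - f y‖ ≤ |K'| * |x - y| ^ H := by
    intro x hx y hy
    refine (hK' x hx y hy).trans ?_
    gcongr; exact le_abs_self _
  have hdg : 0 < (d:ℝ) - g := by linarith
  have hdg' : 0 < (d:ℝ) - g' := by linarith
  set θ := H * (d - g') / (d - g) with hθ
  have hθ0 : 0 < θ := by have := hH.1; positivity
  have hθH : θ < H := by
    rw [hθ, div_lt_iff₀ hdg]
    have := hH.1
    gcongr
  have hθe : θ * (d - g) = H * (d - g') := by rw [hθ]; field_simp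
  obtain ⟨C, hC, hae⟩ := fb_holder P H hH d B hB θ hθ0 hθH
  set S : ℕ → Set Ω := fun N => {ω | (∀ n, N ≤ n → ∀ s ∈ Icc (0:ℝ) 1, ∀ t ∈ Icc (0:ℝ) 1, |s - t| ≤ (1/2)^n →
      ∀ i, |B ω s i - B ω t i| ≤ C * ((1/2)^n)^θ) ∧ ∃ t ∈ E, B ω t + f t ∈ F} with hS
  have hSN : ∀ N, P (S N) = 0 := by
    intro N
    obtain ⟨C3, hC3, δ, hδ, hloc⟩ := fb_upper_local P H hH d B hB a b ha hb f |K'| (abs_nonneg _) hf E hEI F g g' hgg hg'd r0 hr0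
      hcov C θ hC hθ0 hθH hθe N
    by_contra hne
    have hC3' : ENNReal.ofReal C3 ≠ 0 := by simpa using hC3
    have hε : 0 < P (S N) / ENNReal.ofReal C3 := ENNReal.div_pos hne ENNReal.ofReal_ne_top
    have hle : (⨅ (c : ℕ → ℝ) (r : ℕ → ℝ)
        (_ : ∀ n, 0 < r n ∧ r n ≤ δ) (_ : E ⊆ ⋃ n, {y | dist y (c n) < r n}),
        ∑' n, ENNReal.ofReal ((2 * r n) ^ (H * (d - g')))) ≤ 0 := by
      rw [← hE0]
      exact le_iSup₂ (f := fun (δ : ℝ) (_ : 0 < δ) => ⨅ (c : ℕ → ℝ) (r : ℕ → ℝ)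
        (_ : ∀ n, 0 < r n ∧ r n ≤ δ) (_ : E ⊆ ⋃ n, {y | dist y (c n) < r n}),
        ∑' n, ENNReal.ofReal ((2 * r n) ^ (H * (d - g')))) δ hδ
    have hlt := lt_of_le_of_lt hle hε
    simp only [iInf_lt_iff] at hlt
    obtain ⟨c, r, hr, hcovE, hsum⟩ := hlt
    have hsub : S N ⊆ ⋃ n, {ω | (∀ n, N ≤ n → ∀ s ∈ Icc (0:ℝ) 1, ∀ t ∈ Icc (0:ℝ) 1, |s - t| ≤ (1/2)^n →
      ∀ i, |B ω s i - B ω t i| ≤ C * ((1/2)^n)^θ) ∧ ∃ t ∈ E, dist t (c n) < r n ∧ B ω t + f t ∈ F} := by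
      rintro ω ⟨h1, t, ht, htF⟩
      obtain ⟨n, hn⟩ := mem_iUnion.1 (hcovE ht)
      exact mem_iUnion.2 ⟨n, h1, t, ht, hn, htF⟩
    have h1 : P (S N) ≤ ENNReal.ofReal C3 * ∑' n, ENNReal.ofReal ((2 * r n) ^ (H * (d - g'))) := by
      rw [← ENNReal.tsum_mul_left]
      exact (measure_mono hsub).trans ((measure_iUnion_le _).trans (ENNReal.tsum_le_tsum fun n =>
        hloc (c n) (r n) (hr n).1 (hr n).2))
    exact absurd h1 (not_le.2 (ENNReal.mul_lt_of_lt_div' hsum))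
  have hU : P (⋃ N, S N) = 0 := measure_iUnion_null hSN
  have : {ω | ∃ t ∈ E, B ω t + f t ∈ F} ⊆ (⋃ N, S N) ∪ {ω | ¬ ∃ N : ℕ, ∀ n, N ≤ n → ∀ s ∈ Icc (0:ℝ) 1, ∀ t ∈ Icc (0:ℝ) 1, |s - t| ≤ (1/2)^n →
      ∀ i, |B ω s i - B ω t i| ≤ C * ((1/2)^n)^θ} := by
    intro ω hω
    by_cases h : ∃ N : ℕ, ∀ n, N ≤ n → ∀ s ∈ Icc (0:ℝ) 1, ∀ t ∈ Icc (0:ℝ) 1, |s - t| ≤ (1/2)^n →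
      ∀ i, |B ω s i - B ω t i| ≤ C * ((1/2)^n)^θ
    · obtain ⟨N, hN⟩ := h
      exact Or.inl (mem_iUnion.2 ⟨N, hN, hω⟩)
    · exact Or.inr h
  exact measure_mono_null this (measure_union_null hU hae)

lemma fb_refine {X ι : Type*} (q : ℕ → X → ι) (hq : ∀ k x y, q (k+1) x = q (k+1) y → q k x = q k y)
    (k j : ℕ) (hkj : k ≤ j) (x y : X) (h : q j x = q j y) : q k x = q k y := by
  induction j, hkj using Nat.le_induction with
  | base => exact h
  | succ n hn ih => exact ih (hq n x y h)

lemma fb_flow_sum {X ι : Type*} [MeasurableSpace X] (q : ℕ → X → ι)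
    (hq : ∀ k x y, q (k+1) x = q (k+1) y → q k x = q k y)
    (hmeas : ∀ k c, MeasurableSet (q k ⁻¹' {c})) (F : Set X) (hfin : ∀ k, (q k '' F).Finite)
    (M : OuterMeasure X) (w : ℕ → ℝ≥0∞) (n k : ℕ)
    (hQ : ∀ G ⊆ F, MeasurableSet G → (∀ x ∈ G, ∀ y ∈ G, q k x = q k y) →
      ∃ ν : Measure X, IsFiniteMeasure ν ∧ ν Gᶜ = 0 ∧ (∀ j, k ≤ j → j ≤ n → ∀ c, ν (q j ⁻¹' {c}) ≤ w j) ∧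
        M G ≤ ν univ) :
    ∀ G ⊆ F, MeasurableSet G → 
      ∃ ν : Measure X, IsFiniteMeasure ν ∧ ν Gᶜ = 0 ∧ (∀ j, k ≤ j → j ≤ n → ∀ c, ν (q j ⁻¹' {c}) ≤ w j) ∧
        M G ≤ ν univ := by
  classical
  intro G hGF hG
  have h1 : ∀ c : ι, ∃ ν : Measure X, IsFiniteMeasure ν ∧ ν (G ∩ q k ⁻¹' {c})ᶜ = 0 ∧
      (∀ j, k ≤ j → j ≤ n → ∀ c, ν (q j ⁻¹' {c}) ≤ w j) ∧ M (G ∩ q k ⁻¹' {c}) ≤ ν univ := by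
    intro c
    apply hQ _ (inter_subset_left.trans hGF) (hG.inter (hmeas k c))
    intro x hx y hy
    rw [hx.2, hy.2]
  choose ν hν1 hν2 hν3 hν4 using h1
  set C := (hfin k).toFinset
  refine ⟨∑ c ∈ C, ν c, inferInstance, ?_, ?_, ?_⟩
  · rw [Measure.finsetSum_apply]
    apply Finset.sum_eq_zero
    intro c _
    exact measure_mono_null (compl_subset_compl.2 inter_subset_left) (hν2 c)
  · intro j hkj hjn c'
    rw [Measure.finsetSum_apply]
    rcases (q j ⁻¹' {c'}).eq_empty_or_nonempty with h | ⟨x, hx⟩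
    · simp [h]
    · have h0 : ∀ c ≠ q k x, ν c (q j ⁻¹' {c'}) = 0 := by
        intro c hc
        refine measure_mono_null ?_ (hν2 c)
        intro y hy hy2
        apply hc
        rw [← hy2.2]
        exact fb_refine q hq k j hkj y x (hy.trans hx.symm)
      calc ∑ c ∈ C, ν c (q j ⁻¹' {c'}) ≤ ν (q k x) (q j ⁻¹' {c'}) := by
            by_cases hC : q k x ∈ C
            · rw [Finset.sum_eq_single_of_mem _ hC (fun c _ hc => h0 c hc)]
            · rw [Finset.sum_eq_zero]
              · exact zero_le
              · intro c hc
                exact h0 c (fun h => hC (h ▸ hc))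
        _ ≤ w j := hν3 _ j hkj hjn c'
  · rw [Measure.finsetSum_apply]
    have : G ⊆ ⋃ c ∈ C, G ∩ q k ⁻¹' {c} := by
      intro x hx
      simp only [mem_iUnion]
      exact ⟨q k x, by simpa [C] using ⟨x, hGF hx, rfl⟩, hx, rfl⟩
    calc M G ≤ M (⋃ c ∈ C, G ∩ q k ⁻¹' {c}) := measure_mono this
      _ ≤ ∑ c ∈ C, M (G ∩ q k ⁻¹' {c}) := measure_biUnion_finset_le _ _
      _ ≤ _ := Finset.sum_le_sum fun c _ => hν4 c

lemma fb_flow {X ι : Type*} [MeasurableSpace X] (q : ℕ → X → ι)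
    (hq : ∀ k x y, q (k+1) x = q (k+1) y → q k x = q k y)
    (hmeas : ∀ k c, MeasurableSet (q k ⁻¹' {c})) (F : Set X) (hfin : ∀ k, (q k '' F).Finite)
    (M : OuterMeasure X) (w : ℕ → ℝ≥0∞) (hw : ∀ k, w k ≠ ∞) (k0 n : ℕ) 
    (hM : ∀ k, k0 ≤ k → ∀ G ⊆ F, (∀ x ∈ G, ∀ y ∈ G, q k x = q k y) → M G ≤ w k) :
    ∀ m k, k + m = n → k0 ≤ k → ∀ G ⊆ F, MeasurableSet G → (∀ x ∈ G, ∀ y ∈ G, q k x = q k y) →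
      ∃ ν : Measure X, IsFiniteMeasure ν ∧ ν Gᶜ = 0 ∧ (∀ j, k ≤ j → j ≤ n → ∀ c, ν (q j ⁻¹' {c}) ≤ w j) ∧
        M G ≤ ν univ := by
  intro m
  induction m with
  | zero =>
    intro k hk hk0 G hGF hG hc
    rcases G.eq_empty_or_nonempty with h | ⟨x, hx⟩
    · exact ⟨0, inferInstance, by simp, by simp, by simp [h]⟩
    · refine ⟨w k • Measure.dirac x, ?_, ?_, ?_, ?_⟩
      · constructor
        simp [(hw k).lt_top]
      · simp [Measure.dirac_apply' _ hG.compl, hx]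
      · intro j hj1 hj2 c
        have : j = k := by omega
        subst this
        calc _ ≤ (w j • Measure.dirac x) univ := measure_mono (subset_univ _)
          _ ≤ _ := by simp
      · simpa using hM k hk0 G hGF hc
  | succ m ih =>
    intro k hk hk0 G hGF hG hc
    obtain ⟨ν, hfinν, hν1, hν2, hν3⟩ := fb_flow_sum q hq hmeas F hfin M w n (k+1) 
      (ih (k+1) (by omega) (by omega)) G hGF hG
    by_cases hle : ν univ ≤ w k
    · refine ⟨ν, hfinν, hν1, ?_, hν3⟩
      intro j hj1 hj2 c
      rcases hj1.eq_or_lt with h | h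
      · subst h
        exact (measure_mono (subset_univ _)).trans hle
      · exact hν2 j h hj2 c
    · push Not at hle
      have hne : ν univ ≠ 0 := (lt_of_le_of_lt zero_le hle).ne'
      have htop : ν univ ≠ ∞ := measure_ne_top _ _
      set θ := w k / ν univ with hθ
      have hθ1 : θ ≤ 1 := ENNReal.div_le_of_le_mul (by simpa using hle.le)
      have htot : (θ • ν) univ = w k := by
        rw [Measure.smul_apply, smul_eq_mul, hθ, ENNReal.div_mul_cancel hne htop]
      have hmono : ∀ s, (θ • ν) s ≤ ν s := by
        intro s
        rw [Measure.smul_apply, smul_eq_mul]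
        exact mul_le_of_le_one_left zero_le hθ1
      refine ⟨θ • ν, ⟨by rw [htot]; exact (hw k).lt_top⟩, ?_, ?_, ?_⟩
      · exact le_antisymm ((hmono _).trans hν1.le) zero_le
      · intro j hj1 hj2 c
        rcases hj1.eq_or_lt with h | h
        · subst h
          exact (measure_mono (subset_univ _)).trans htot.le
        · exact (hmono _).trans (hν2 j h hj2 c)
      · rw [htot]
        exact hM k hk0 G hGF hc

lemma fb_pre (d : ℕ) (F : Set (Fin d → ℝ)) (γ : ℝ) (hγ : 0 < γ) (h : ENNReal.ofReal γ < dimH F) :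
    ∃ M : OuterMeasure (Fin d → ℝ), M F ≠ 0 ∧ ∃ k0 : ℕ, ∀ k, k0 ≤ k → ∀ G : Set (Fin d → ℝ),
      (Metric.ediam G ≤ ENNReal.ofReal ((1/2)^k)) → M G ≤ ENNReal.ofReal (((1/2)^k)^γ) := by
  have h1 : μH[γ] F = ∞ := by
    have := hausdorffMeasure_of_lt_dimH (s := F) (d := Real.toNNReal γ) h
    rwa [Real.coe_toNNReal _ hγ.le] at this
  have h2 : (OuterMeasure.mkMetric (fun r : ℝ≥0∞ => r^γ) : OuterMeasure (Fin d → ℝ)) F = ∞ := by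
    rw [← h1, Measure.hausdorffMeasure, ← Measure.mkMetric_toOuterMeasure]; rfl
  unfold OuterMeasure.mkMetric OuterMeasure.mkMetric' at h2
  simp only [OuterMeasure.iSup_apply] at h2
  have h3 : (0:ℝ≥0∞) < ⨆ r : ℝ≥0∞, ⨆ _ : r > 0, (OuterMeasure.mkMetric'.pre (fun s : Set (Fin d → ℝ) => (Metric.ediam s)^γ) r) F := by
    rw [h2]; simp
  simp only [lt_iSup_iff] at h3
  obtain ⟨r, hr, hF⟩ := h3
  refine ⟨_, hF.ne', ?_⟩
  obtain ⟨k0, hk0⟩ := ENNReal.exists_inv_two_pow_lt hr.ne'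
  refine ⟨k0, fun k hk G hG => ?_⟩
  have e : ∀ k : ℕ, ENNReal.ofReal ((1/2)^k) = (2⁻¹:ℝ≥0∞)^k := by
    intro k
    rw [ENNReal.ofReal_pow (by norm_num), one_div, ENNReal.ofReal_inv_of_pos (by norm_num)]
    simp
  have hle : Metric.ediam G ≤ r := by
    refine hG.trans ?_
    rw [e]
    refine le_trans ?_ hk0.le
    exact pow_le_pow_of_le_one zero_le (by simp) hk
  refine (OuterMeasure.mkMetric'.pre_le hle).trans ?_
  rw [← ENNReal.ofReal_rpow_of_pos (by positivity)]
  exact ENNReal.rpow_le_rpow hG hγ.le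

lemma fb_floor_refine (k : ℕ) (x : ℝ) : ⌊2^k * x⌋ = ⌊2^(k+1) * x⌋ / 2 := by
  have : 2^k * x = (2^(k+1) * x) / ((2:ℕ):ℝ) := by rw [pow_succ]; push_cast; ring
  rw [this, Int.floor_div_natCast]
  rfl

lemma fb_frostman (d : ℕ) (F : Set (Fin d → ℝ)) (hF : IsCompact F) (γ : ℝ) (hγ : 0 < γ) (h : ENNReal.ofReal γ < dimH F) :
    ∃ m : ℝ≥0∞, m ≠ 0 ∧ ∃ C : ℝ, 0 < C ∧ ∃ n0 : ℕ, ∀ n, n0 ≤ n → ∃ ν : Measure (Fin d → ℝ), IsFiniteMeasure ν ∧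
      ν Fᶜ = 0 ∧ m ≤ ν univ ∧ ν univ ≤ ENNReal.ofReal C ∧
      ∀ x r, (1/2)^n ≤ r → ν (Metric.closedBall x r) ≤ ENNReal.ofReal (C * r^γ) := by
  classical
  obtain ⟨M, hMF, k0, hM⟩ := fb_pre d F γ hγ h
  set q : ℕ → (Fin d → ℝ) → (Fin d → ℤ) := fun k x i => ⌊2^k * x i⌋ with hq
  have hqm : ∀ k, Measurable (q k) := by
    intro k
    apply measurable_pi_lambda
    intro i
    exact Int.measurable_floor.comp ((measurable_pi_apply i).const_mul _)
  have hmeas : ∀ k c, MeasurableSet (q k ⁻¹' {c}) := fun k c => hqm k (measurableSet_singleton c)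
  have href : ∀ k x y, q (k+1) x = q (k+1) y → q k x = q k y := by
    intro k x y hxy
    funext i
    have := congrFun hxy i
    simp only [hq] at this ⊢
    rw [fb_floor_refine, this, ← fb_floor_refine]
  have hfin : ∀ k, (q k '' F).Finite := by
    intro k
    obtain ⟨R, hR⟩ := hF.isBounded.exists_norm_le
    apply Set.Finite.subset (Set.Finite.pi' (t := fun _ : Fin d => Icc ⌊-(2^k*R)⌋ ⌊2^k*R⌋) (fun i => Set.finite_Icc _ _))
    rintro _ ⟨x, hx, rfl⟩
    intro i
    have h1 : |x i| ≤ R := by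
      rw [← Real.norm_eq_abs]; exact (norm_le_pi_norm x i).trans (hR x hx)
    have h2 := abs_le.1 h1
    have hp : (0:ℝ) < 2^k := by positivity
    constructor
    · apply Int.floor_mono; nlinarith
    · apply Int.floor_mono; nlinarith
  set w : ℕ → ℝ≥0∞ := fun k => ENNReal.ofReal (((1/2)^k)^γ) with hw
  have hdiam : ∀ k, k0 ≤ k → ∀ G ⊆ F, (∀ x ∈ G, ∀ y ∈ G, q k x = q k y) → M G ≤ w k := by
    intro k hk G _ hG
    apply hM k hk
    apply Metric.ediam_le
    intro x hx y hy
    rw [edist_dist]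
    apply ENNReal.ofReal_le_ofReal
    rw [dist_pi_le_iff (by positivity)]
    intro i
    have h1 := congrFun (hG x hx y hy) i
    simp only [hq] at h1
    have h2 := Int.abs_sub_lt_one_of_floor_eq_floor h1
    rw [← mul_sub, abs_mul, abs_of_pos (by positivity)] at h2
    rw [Real.dist_eq, one_div, inv_pow, ← one_div, le_div_iff₀ (by positivity)]
    linarith
  set T := (hfin k0).toFinset with hT
  refine ⟨M F, hMF, 3^d * 2^γ + T.card + 1, by positivity, k0, fun n hn => ?_⟩
  obtain ⟨ν, hνf, hν1, hν2, hν3⟩ := fb_flow_sum q href hmeas F hfin M w n k0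
    (fb_flow q href hmeas F hfin M w (fun k => ENNReal.ofReal_ne_top) k0 n hdiam (n - k0) k0 (by omega) le_rfl)
    F subset_rfl hF.measurableSet
  have hwk : ∀ k, ((1/2:ℝ)^k)^γ ≤ 1 := fun k => Real.rpow_le_one (by positivity) (pow_le_one₀ (by norm_num) (by norm_num)) hγ.le
  have htot : ν univ ≤ ENNReal.ofReal (T.card * ((1/2)^k0)^γ) := by
    have hs : (univ : Set (Fin d → ℝ)) ⊆ Fᶜ ∪ ⋃ c ∈ T, q k0 ⁻¹' {c} := by
      intro x _
      by_cases hx : x ∈ F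
      · right
        refine mem_iUnion₂.2 ⟨q k0 x, ?_, rfl⟩
        simpa [hT] using ⟨x, hx, rfl⟩
      · exact Or.inl hx
    calc ν univ ≤ ν Fᶜ + ν (⋃ c ∈ T, q k0 ⁻¹' {c}) := (measure_mono hs).trans (measure_union_le _ _)
      _ ≤ 0 + ∑ c ∈ T, w k0 := by
        rw [hν1]
        gcongr
        exact (measure_biUnion_finset_le _ _).trans (Finset.sum_le_sum fun c _ => hν2 k0 le_rfl hn c)
      _ = _ := by
        rw [zero_add, Finset.sum_const, nsmul_eq_mul, ENNReal.ofReal_mul (by positivity), ENNReal.ofReal_natCast]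
  refine ⟨ν, hνf, hν1, hν3, ?_, ?_⟩
  · refine htot.trans (ENNReal.ofReal_le_ofReal ?_)
    have h1 : (T.card:ℝ) * ((1/2)^k0)^γ ≤ T.card * 1 := by gcongr; exact hwk k0
    have h2 : (0:ℝ) < 3^d * 2^γ := by positivity
    linarith
  · intro x r hr
    have hr0 : 0 < r := lt_of_lt_of_le (by positivity) hr
    by_cases hrk : r ≤ (1/2)^k0
    · obtain ⟨j, hj1, hj2⟩ := exists_nat_pow_near_of_lt_one hr0 (hrk.trans (pow_le_one₀ (by norm_num) (by norm_num))) (by norm_num : (0:ℝ) < 1/2) (by norm_num)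
      have hjn : j ≤ n := by
        by_contra hlt
        push Not at hlt
        have : (1/2:ℝ)^j < (1/2)^n := pow_lt_pow_right_of_lt_one₀ (by norm_num) (by norm_num) hlt
        linarith
      have hjk : k0 ≤ j := by
        by_contra hlt
        push Not at hlt
        have : (1/2:ℝ)^k0 ≤ (1/2)^(j+1) := pow_le_pow_of_le_one (by norm_num) (by norm_num) hlt
        linarith
      set J := Fintype.piFinset (fun i => Finset.Icc (q j x i - 1) (q j x i + 1)) with hJ
      have hcard : J.card = 3^d := by
        rw [hJ, Fintype.card_piFinset]
        simp only [Int.card_Icc]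
        rw [Finset.prod_congr rfl (fun i _ => show (q j x i + 1 + 1 - (q j x i - 1)).toNat = 3 by
          rw [show q j x i + 1 + 1 - (q j x i - 1) = 3 by ring]; rfl)]
        simp
      have hs : Metric.closedBall x r ⊆ ⋃ c ∈ J, q j ⁻¹' {c} := by
        intro y hy
        refine mem_iUnion₂.2 ⟨q j y, ?_, rfl⟩
        rw [hJ, Fintype.mem_piFinset]
        intro i
        have h1 : |y i - x i| ≤ (1/2)^j := by
          rw [← Real.dist_eq]; exact ((dist_le_pi_dist y x i).trans hy).trans hj2
        have h2 := abs_le.1 h1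
        have hp : (0:ℝ) < 2^j := by positivity
        have hpp : (2:ℝ)^j * (1/2)^j = 1 := by rw [← mul_pow]; norm_num
        rw [Finset.mem_Icc]
        simp only [hq]
        constructor
        · rw [← Int.floor_sub_one]; apply Int.floor_mono; nlinarith
        · rw [← Int.floor_add_one]; apply Int.floor_mono; nlinarith
      calc ν (Metric.closedBall x r) ≤ ∑ c ∈ J, ν (q j ⁻¹' {c}) := (measure_mono hs).trans (measure_biUnion_finset_le _ _)
        _ ≤ ∑ c ∈ J, w j := Finset.sum_le_sum fun c _ => hν2 j hjk hjn c
        _ = ENNReal.ofReal (3^d * ((1/2)^j)^γ) := by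
          rw [Finset.sum_const, nsmul_eq_mul, hcard, ENNReal.ofReal_mul (by positivity), ENNReal.ofReal_pow (by norm_num)]
          simp [hw]
        _ ≤ _ := by
          apply ENNReal.ofReal_le_ofReal
          have h1 : ((1/2:ℝ)^j)^γ ≤ 2^γ * r^γ := by
            rw [← Real.mul_rpow (by norm_num) hr0.le]
            apply Real.rpow_le_rpow (by positivity) _ hγ.le
            rw [pow_succ] at hj1; linarith
          have h2 : 0 < r^γ := by positivity
          have h3 : (3:ℝ)^d * ((1/2:ℝ)^j)^γ ≤ 3^d * (2^γ * r^γ) := by gcongr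
          have h4 : (0:ℝ) ≤ T.card := by positivity
          nlinarith
    · push Not at hrk
      refine (measure_mono (subset_univ _)).trans (htot.trans (ENNReal.ofReal_le_ofReal ?_))
      have h1 : ((1/2:ℝ)^k0)^γ ≤ r^γ := Real.rpow_le_rpow (by positivity) hrk.le hγ.le
      have h2 : (0:ℝ) < 3^d * 2^γ := by positivity
      have h3 : 0 < r^γ := by positivity
      have h4 : (0:ℝ) ≤ T.card := by positivity
      have h5 : (T.card:ℝ) * ((1/2:ℝ)^k0)^γ ≤ T.card * r^γ := by gcongr
      nlinarith [mul_pos h2 h3]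

lemma fb_kernel (d : ℕ) (γ : ℝ) (hγd : γ < d) (C : ℝ) (hC : 0 < C) :
    ∃ C' : ℝ, 0 < C' ∧ ∀ (ν : Measure (Fin d → ℝ)) (ε : ℝ), 0 < ε →
      (∀ x r, ε ≤ r → ν (Metric.closedBall x r) ≤ ENNReal.ofReal (C * r^γ)) →
      ∀ x R, ε ≤ R → ∫⁻ y, ENNReal.ofReal ((1 / max R (dist x y))^d) ∂ν ≤ ENNReal.ofReal (C' * R^(γ - d)) := by
  set δ : ℝ := 2^(γ-d) with hδ
  have hδ0 : 0 < δ := by positivity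
  have hδ1 : δ < 1 := Real.rpow_lt_one_of_one_lt_of_neg (by norm_num) (by linarith)
  have h1δ : 0 < 1 - δ := by linarith
  refine ⟨2^d * C * (1-δ)⁻¹, by positivity, ?_⟩
  intro ν ε hε hν x R hR
  have hR0 : 0 < R := hε.trans_le hR
  have hpt : ∀ y, ENNReal.ofReal ((1 / max R (dist x y))^d) ≤
      ∑' k : ℕ, (Metric.closedBall x (2^k*R)).indicator (fun _ => ENNReal.ofReal ((2 / (2^k*R))^d)) y := by
    intro y
    have hex : ∃ k : ℕ, dist x y ≤ 2^k * R := by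
      obtain ⟨k, hk⟩ := pow_unbounded_of_one_lt (dist x y / R) (by norm_num : (1:ℝ) < 2)
      refine ⟨k, ?_⟩
      rw [div_lt_iff₀ hR0] at hk
      exact hk.le
    classical
    set k := Nat.find hex with hk
    have hk1 : dist x y ≤ 2^k*R := Nat.find_spec hex
    refine le_trans ?_ (ENNReal.le_tsum k)
    rw [indicator_of_mem (by rw [Metric.mem_closedBall, dist_comm]; exact hk1)]
    apply ENNReal.ofReal_le_ofReal
    have hmax : 0 < max R (dist x y) := lt_max_of_lt_left hR0
    gcongr ?_ ^ d
    rw [div_le_div_iff₀ hmax (by positivity)]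
    rcases Nat.eq_zero_or_pos k with h0 | h0
    · rw [h0]; have := le_max_left R (dist x y); linarith
    · have := Nat.find_min hex (m := k - 1) (by omega)
      push Not at this
      have h2 : (2:ℝ)^k = 2^(k-1) * 2 := by rw [← pow_succ]; congr 1; omega
      have := le_max_right R (dist x y)
      rw [h2]; linarith
  calc _ ≤ ∫⁻ y, ∑' k : ℕ, (Metric.closedBall x (2^k*R)).indicator (fun _ => ENNReal.ofReal ((2 / (2^k*R))^d)) y ∂ν := lintegral_mono hpt
    _ = ∑' k : ℕ, ∫⁻ y, (Metric.closedBall x (2^k*R)).indicator (fun _ => ENNReal.ofReal ((2 / (2^k*R))^d)) y ∂ν :=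
      lintegral_tsum fun k => (measurable_const.indicator Metric.isClosed_closedBall.measurableSet).aemeasurable
    _ ≤ ∑' k : ℕ, ENNReal.ofReal (2^d * C * R^(γ-d) * δ^k) := by
      apply ENNReal.tsum_le_tsum
      intro k
      rw [lintegral_indicator_const Metric.isClosed_closedBall.measurableSet]
      have hle : R ≤ 2^k * R := le_mul_of_one_le_left hR0.le (one_le_pow₀ (by norm_num))
      refine (mul_le_mul_right (hν x (2^k*R) (hR.trans hle)) _).trans ?_
      rw [← ENNReal.ofReal_mul (by positivity)]
      apply ENNReal.ofReal_le_ofReal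
      apply le_of_eq
      have hp : 0 < 2^k*R := by positivity
      have e1 : (2 / (2^k*R))^d = 2^d * (2^k*R)^(-(d:ℝ)) := by
        rw [Real.rpow_neg hp.le, Real.rpow_natCast, div_pow]; rfl
      have e2 : (2^k*R)^(-(d:ℝ)) * (2^k*R)^γ = R^(γ-d) * δ^k := by
        rw [← Real.rpow_add hp, Real.mul_rpow (by positivity) hR0.le, hδ, ← Real.rpow_natCast, ← Real.rpow_natCast,
          ← Real.rpow_mul (by norm_num), ← Real.rpow_mul (by norm_num), mul_comm]
        congr 1
        · congr 1; ring
        · congr 1; ring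
      rw [e1]
      calc _ = 2^d * C * ((2^k*R)^(-(d:ℝ)) * (2^k*R)^γ) := by ring
        _ = _ := by rw [e2]; ring
    _ = ENNReal.ofReal (∑' k : ℕ, 2^d * C * R^(γ-d) * δ^k) := by
      rw [ENNReal.ofReal_tsum_of_nonneg]
      · intro n; positivity
      · exact (summable_geometric_of_lt_one hδ0.le hδ1).mul_left _
    _ = _ := by
      rw [tsum_mul_left, tsum_geometric_of_lt_one hδ0.le hδ1]
      congr 1; ring

lemma fb_pz {Ω Y : Type*} [MeasurableSpace Ω] [MeasurableSpace Y] (P : Measure Ω) [IsProbabilityMeasure P]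
    (m : Measure Y) [IsFiniteMeasure m] (A : Set (Ω × Y)) (hA : MeasurableSet A) :
    (∫⁻ p, P {ω | (ω, p) ∈ A} ∂m)^2 ≤ P {ω | m {p | (ω,p) ∈ A} ≠ 0} *
      ∫⁻ p, ∫⁻ p', P {ω | (ω,p) ∈ A ∧ (ω,p') ∈ A} ∂m ∂m := by
  set Z : Ω → ℝ≥0∞ := fun ω => m {p | (ω,p) ∈ A} with hZ
  have hZm : Measurable Z := measurable_measure_prodMk_left hA
  have h1 : ∫⁻ p, P {ω | (ω, p) ∈ A} ∂m = ∫⁻ ω, Z ω ∂P := by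
    exact (Measure.prod_apply_symm (μ := P) (ν := m) hA).symm.trans (Measure.prod_apply hA)
  have h2 : ∫⁻ p, ∫⁻ p', P {ω | (ω,p) ∈ A ∧ (ω,p') ∈ A} ∂m ∂m = ∫⁻ ω, Z ω ^ 2 ∂P := by
    set A2 : Set (Ω × (Y × Y)) := {z | (z.1, z.2.1) ∈ A ∧ (z.1, z.2.2) ∈ A} with hA2
    have hA2m : MeasurableSet A2 := by
      apply MeasurableSet.inter
      · exact (measurable_fst.prodMk (measurable_fst.comp measurable_snd)) hA
      · exact (measurable_fst.prodMk (measurable_snd.comp measurable_snd)) hA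
    have e1 : (P.prod (m.prod m)) A2 = ∫⁻ ω, Z ω ^ 2 ∂P := by
      rw [Measure.prod_apply hA2m]
      congr 1; funext ω
      have : Prod.mk ω ⁻¹' A2 = {p | (ω,p) ∈ A} ×ˢ {p | (ω,p) ∈ A} := by
        ext ⟨p, p'⟩; simp [hA2]
      rw [this, Measure.prod_prod, sq]
    rw [← e1, Measure.prod_apply_symm hA2m, lintegral_prod _ (measurable_measure_prodMk_right hA2m).aemeasurable]
    rfl
  rw [h1, h2]
  have hmeasS : MeasurableSet {ω | Z ω ≠ 0} := hZm (measurableSet_singleton 0).compl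
  have h3 : ∫⁻ ω, Z ω ∂P = ∫⁻ ω, (({ω | Z ω ≠ 0}.indicator 1 : Ω → ℝ≥0∞) * Z) ω ∂P := by
    congr 1; funext ω
    by_cases h : Z ω = 0
    · simp [h]
    · simp [h]
  have h4 := ENNReal.lintegral_mul_le_Lp_mul_Lq P (Real.HolderConjugate.two_two)
    (f := ({ω | Z ω ≠ 0}.indicator 1 : Ω → ℝ≥0∞)) (g := Z) ((measurable_one.indicator hmeasS).aemeasurable) hZm.aemeasurable
  rw [← h3] at h4
  have h5 : ∫⁻ ω, ({ω | Z ω ≠ 0}.indicator 1 : Ω → ℝ≥0∞) ω ^ (2:ℝ) ∂P = P {ω | Z ω ≠ 0} := by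
    rw [← lintegral_indicator_one hmeasS]
    congr 1; funext ω
    by_cases h : Z ω = 0
    · simp [h]
    · simp [h]
  have h6 : ∫⁻ ω, Z ω ^ (2:ℝ) ∂P = ∫⁻ ω, Z ω ^ 2 ∂P := by
    congr 1; funext ω; exact_mod_cast ENNReal.rpow_natCast (Z ω) 2
  rw [h5, h6] at h4
  calc (∫⁻ ω, Z ω ∂P)^2 ≤ (P {ω | Z ω ≠ 0} ^ (1/2:ℝ) * (∫⁻ ω, Z ω ^ 2 ∂P)^(1/2:ℝ))^2 := by gcongr
    _ = _ := by
      rw [mul_pow, ← ENNReal.rpow_natCast, ← ENNReal.rpow_natCast (_ ^ (1/2:ℝ)), ← ENNReal.rpow_mul, ← ENNReal.rpow_mul]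
      norm_num
      rfl

set_option maxHeartbeats 1000000 in
lemma fb_lower1 {Ω : Type*} [MeasurableSpace Ω] (P : Measure Ω) [IsProbabilityMeasure P]
    (H : ℝ) (hH : H ∈ Ioo (0 : ℝ) 1) (d : ℕ) (hd : 0 < d)
    (B : Ω → ℝ → EuclideanSpace ℝ (Fin d)) (hB : IsFBM P H d B)
    (a b : ℝ) (ha : 0 < a) (hab : a < b) (hb : b ≤ 1)
    (f : ℝ → Fin d → ℝ) (K : ℝ) (hK : 0 ≤ K) (hfc : ContinuousOn f (Icc a b))
    (hf : ∀ x ∈ Icc a b, ∀ y ∈ Icc a b, dist (f x) (f y) ≤ K * |x - y| ^ H)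
    (E : Set ℝ) (hEI : E ⊆ Set.Icc a b)
    (F : Set (Fin d → ℝ)) (M : ℝ) (hM0 : 0 ≤ M) (hM : ∀ t ∈ E, ∀ x ∈ F, ∀ i, |x i - f t i| ≤ M)
    (γ : ℝ) (hγd : γ < d) (C : ℝ) (hC : 0 < C)
    (μ : Measure ℝ) [IsProbabilityMeasure μ] (hμ : μ Eᶜ = 0) :
    ∃ c K2 : ℝ, 0 < c ∧ 0 < K2 ∧ ∀ (n : ℕ) (ν : Measure (Fin d → ℝ)), IsFiniteMeasure ν → ν Fᶜ = 0 →
      ν univ ≤ ENNReal.ofReal C →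
      (∀ x r, (1/2)^n ≤ r → ν (Metric.closedBall x r) ≤ ENNReal.ofReal (C * r^γ)) →
      ∃ S : Set Ω, MeasurableSet S ∧ S ⊆ {ω | ∃ t ∈ E, ∃ x ∈ F, ∀ i, |B ω t i + f t i - x i| ≤ (1/2)^n} ∧
        ENNReal.ofReal c ^ 2 * (ν univ)^2 ≤ P S * (ENNReal.ofReal K2 * energy (fun x y : ℝ => dist x y) (H * (d - γ)) μ) := by
  obtain ⟨c, hc, hlow⟩ := fb_single_lower P H hH d B hB a M ha
  obtain ⟨K1, hK1, hmul⟩ := fb_multi P H hH d hd B hB a M ha (by linarith) hM0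
  obtain ⟨C', hC', hker⟩ := fb_kernel d γ hγd C hC
  refine ⟨c, K1 * (1+K)^d * C' * C, hc, by positivity, ?_⟩
  intro n ν hνf hνF hνC hν
  set ε : ℝ := (1/2)^n with hε
  have hε0 : 0 < ε := by positivity
  have hε1 : ε ≤ 1 := pow_le_one₀ (by norm_num) (by norm_num)
  have hEd : ∀ t ∈ E, t ∈ Icc a 1 := fun t ht => ⟨(hEI ht).1, (hEI ht).2.trans hb⟩
  have hp1 : ∀ t ∈ E, (projIcc (0:ℝ) 1 zero_le_one t : ℝ) = t := by
    intro t ht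
    rw [projIcc_of_mem _ ⟨ha.le.trans (hEd t ht).1, (hEd t ht).2⟩]
  have hp2 : ∀ t ∈ E, (projIcc a b hab.le t : ℝ) = t := by
    intro t ht
    rw [projIcc_of_mem _ (hEI ht)]
  set A : Set (Ω × (ℝ × (Fin d → ℝ))) := {z | ∀ i, |B z.1 (projIcc (0:ℝ) 1 zero_le_one z.2.1) i +
    f (projIcc a b hab.le z.2.1) i - z.2.2 i| ≤ ε} with hA
  have hAm : MeasurableSet A := by
    have : A = ⋂ i, {z | |B z.1 (projIcc (0:ℝ) 1 zero_le_one z.2.1) i +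
        f (projIcc a b hab.le z.2.1) i - z.2.2 i| ≤ ε} := by
      ext z; simp [hA]
    rw [this]
    apply MeasurableSet.iInter
    intro i
    apply measurableSet_le _ measurable_const
    have m1 : Measurable (Function.uncurry (fun (t : ℝ) (ω : Ω) => B ω (projIcc (0:ℝ) 1 zero_le_one t) i)) := by
      apply measurable_uncurry_of_continuous_of_measurable
      · intro ω
        have := (EuclideanSpace.proj (𝕜 := ℝ) i).continuous.comp_continuousOn (hB.cont ω)
        exact this.comp_continuous (continuous_subtype_val.comp continuous_projIcc) (fun t => (projIcc (0:ℝ) 1 zero_le_one t).2)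
      · intro t
        exact (EuclideanSpace.proj (𝕜 := ℝ) i).continuous.measurable.comp (hB.meas _)
    have m2 : Measurable (fun z : Ω × (ℝ × (Fin d → ℝ)) => B z.1 (projIcc (0:ℝ) 1 zero_le_one z.2.1) i) :=
      m1.comp ((measurable_fst.comp measurable_snd).prodMk measurable_fst)
    have m3 : Continuous (fun t : ℝ => f (projIcc a b hab.le t)) :=
      hfc.comp_continuous (continuous_subtype_val.comp continuous_projIcc) (fun t => (projIcc a b hab.le t).2)
    have m4 : Measurable (fun z : Ω × (ℝ × (Fin d → ℝ)) => f (projIcc a b hab.le z.2.1) i) :=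
      ((continuous_apply i).comp m3).measurable.comp (measurable_fst.comp measurable_snd)
    have m5 : Measurable (fun z : Ω × (ℝ × (Fin d → ℝ)) => z.2.2 i) :=
      (measurable_pi_apply i).comp (measurable_snd.comp measurable_snd)
    exact ((m2.add m4).sub m5).abs
  have hAmem : ∀ ω, ∀ t ∈ E, ∀ x, (ω, (t, x)) ∈ A ↔ ∀ i, B ω t i ∈ Icc ((x i - f t i) - ε) ((x i - f t i) + ε) := by
    intro ω t ht x
    simp only [hA, mem_ofPred_eq, hp1 t ht, hp2 t ht]
    apply forall_congr'
    intro i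
    rw [abs_le, mem_Icc]
    constructor
    · rintro ⟨h1, h2⟩; constructor <;> linarith
    · rintro ⟨h1, h2⟩; constructor <;> linarith
  set m := μ.prod ν with hm
  have hmnull : m (E ×ˢ F)ᶜ = 0 := by
    have hs : (E ×ˢ F)ᶜ ⊆ Eᶜ ×ˢ univ ∪ univ ×ˢ Fᶜ := by
      rintro ⟨t, x⟩ h
      simp only [mem_compl_iff, mem_prod, not_and_or] at h
      rcases h with h | h
      · left; simpa using h
      · right; simpa using h
    refine measure_mono_null hs (measure_union_null ?_ ?_)
    · rw [hm, Measure.prod_prod, hμ, zero_mul]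
    · rw [hm, Measure.prod_prod, hνF, mul_zero]
  have hmae : ∀ᵐ p ∂m, p.1 ∈ E ∧ p.2 ∈ F := hmnull
  have hmu : m univ = ν univ := by
    rw [hm, ← univ_prod_univ, Measure.prod_prod, measure_univ, one_mul]
  have hpz := fb_pz P m A hAm
  refine ⟨{ω | m {p | (ω,p) ∈ A} ≠ 0}, ?_, ?_, ?_⟩
  · exact (measurable_measure_prodMk_left hAm) (measurableSet_singleton 0).compl
  · intro ω hω
    by_contra hno
    apply hω
    refine measure_mono_null ?_ hmnull
    rintro ⟨t, x⟩ htx ⟨ht, hx⟩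
    apply hno
    refine ⟨t, ht, x, hx, ?_⟩
    intro i
    have := htx i
    simpa only [hp1 t ht, hp2 t ht] using this
  have hfirst : ENNReal.ofReal (c * ε^d) * ν univ ≤ ∫⁻ p, P {ω | (ω, p) ∈ A} ∂m := by
    rw [← hmu, ← lintegral_const]
    apply lintegral_mono_ae
    filter_upwards [hmae] with p hp
    refine (hlow p.1 (hEd _ hp.1) (fun i => p.2 i - f p.1 i) ε (hM p.1 hp.1 p.2 hp.2) hε0.le hε1).trans ?_
    apply measure_mono
    intro ω hω
    exact (hAmem ω p.1 hp.1 p.2).2 hω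
  set κ : ℝ := K1 * (1+K)^d * C' with hκ
  have hκ0 : 0 < κ := by positivity
  have hin : ∀ s ∈ E, ∀ x ∈ F, ∀ t ∈ E, ∫⁻ x', P {ω | (ω,(s,x)) ∈ A ∧ (ω,(t,x')) ∈ A} ∂ν ≤
      ENNReal.ofReal (κ * (ε^d)^2) * radialKernel (H * (d - γ)) (dist s t) := by
    intro s hs x hx t ht
    have hα : 0 < H * (d - γ) := mul_pos hH.1 (by linarith)
    rw [radialKernel, if_pos hα]
    by_cases hst : s = t
    · rw [hst, dist_self, ENNReal.ofReal_zero, ENNReal.zero_rpow_of_neg (by linarith),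
        ENNReal.mul_top (by simp; positivity)]
      exact le_top
    have hts : 0 < |t - s| := abs_pos.2 (sub_ne_zero.2 (Ne.symm hst))
    set ρ := |t-s|^H with hρ
    have hρ0 : 0 < ρ := Real.rpow_pos_of_pos hts _
    set R := max ρ ε with hR
    have hR0 : 0 < R := lt_max_of_lt_left hρ0
    have hpt : ∀ x', P {ω | (ω,(s,x)) ∈ A ∧ (ω,(t,x')) ∈ A} ≤ 
        ENNReal.ofReal (K1 * (1+K)^d * (ε^d)^2) * ENNReal.ofReal ((1 / max R (dist x x'))^d) := by
      intro x'
      have h1 := hmul s (hEd s hs) t (hEd t ht) hst (fun i => x i - f s i) (fun i => x' i - f t i) ε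
        (hM s hs x hx) hε0 hε1
      refine le_trans (measure_mono ?_) (h1.trans ?_)
      · rintro ω ⟨h2, h3⟩
        exact ⟨(hAmem ω s hs x).1 h2, (hAmem ω t ht x').1 h3⟩
      · rw [← ENNReal.ofReal_mul (by positivity)]
        apply ENNReal.ofReal_le_ofReal
        set y : Fin d → ℝ := fun i => x i - f s i
        set z : Fin d → ℝ := fun i => x' i - f t i
        have hy : y = x - f s := rfl
        have hz : z = x' - f t := rfl
        have hdist : dist x x' ≤ dist y z + K * ρ := by
          have h4 := hf s (hEI hs) t (hEI ht)
          have e : x - x' = (y - z) + (f s - f t) := by rw [hy, hz]; abel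
          rw [dist_eq_norm, e]
          refine (norm_add_le _ _).trans ?_
          rw [← dist_eq_norm, ← dist_eq_norm, hρ, abs_sub_comm]
          gcongr
        set Q := max R (dist y z) with hQ
        have hQ0 : 0 < Q := lt_max_of_lt_left hR0
        have hmaxle : max R (dist x x') ≤ (1+K) * Q := by
          have h5 : R ≤ Q := le_max_left _ _
          have h6 : dist y z ≤ Q := le_max_right _ _
          have h7 : ρ ≤ Q := (le_max_left _ _).trans h5
          have h8 : K * ρ ≤ K * Q := by gcongr
          have h9 : 0 ≤ K * Q := by positivity
          apply max_le
          · linarith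
          · linarith
        have hmx : 0 < max R (dist x x') := lt_max_of_lt_left hR0
        have h10 : ε^2 / Q ≤ (1+K) * ε^2 * (1 / max R (dist x x')) := by
          rw [mul_one_div, div_le_div_iff₀ hQ0 hmx]
          nlinarith [pow_pos hε0 2]
        calc K1 * (ε^2/Q)^d ≤ K1 * ((1+K) * ε^2 * (1 / max R (dist x x')))^d := by gcongr
          _ = _ := by rw [mul_pow, mul_pow, ← pow_mul, ← pow_mul, mul_comm 2 d]; ring
    calc _ ≤ ∫⁻ x', ENNReal.ofReal (K1 * (1+K)^d * (ε^d)^2) * ENNReal.ofReal ((1 / max R (dist x x'))^d) ∂ν :=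
          lintegral_mono hpt
      _ = ENNReal.ofReal (K1 * (1+K)^d * (ε^d)^2) * ∫⁻ x', ENNReal.ofReal ((1 / max R (dist x x'))^d) ∂ν :=
          lintegral_const_mul' _ _ ENNReal.ofReal_ne_top
      _ ≤ ENNReal.ofReal (K1 * (1+K)^d * (ε^d)^2) * ENNReal.ofReal (C' * R^(γ-d)) :=
          mul_le_mul_right (hker ν ε hε0 hν x R (le_max_right _ _)) _
      _ ≤ ENNReal.ofReal (K1 * (1+K)^d * (ε^d)^2) * ENNReal.ofReal (C' * ρ^(γ-d)) := by
          refine mul_le_mul_right (ENNReal.ofReal_le_ofReal (mul_le_mul_of_nonneg_left ?_ hC'.le)) _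
          exact Real.rpow_le_rpow_of_nonpos hρ0 (le_max_left _ _) (by linarith)
      _ = _ := by
          rw [ENNReal.ofReal_rpow_of_pos (by rw [dist_comm, Real.dist_eq]; exact hts), ← ENNReal.ofReal_mul (by positivity), ← ENNReal.ofReal_mul (by positivity)]
          congr 1
          have : ρ^(γ-d) = dist s t ^ (-(H * (d-γ))) := by
            rw [dist_comm, Real.dist_eq, hρ, ← Real.rpow_mul hts.le]; congr 1; ring
          rw [this, hκ]; ring
  have hsecond : ∫⁻ p, ∫⁻ p', P {ω | (ω,p) ∈ A ∧ (ω,p') ∈ A} ∂m ∂m ≤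
      ENNReal.ofReal (κ * (ε^d)^2) * energy (fun x y : ℝ => dist x y) (H * (d - γ)) μ * ENNReal.ofReal C := by
    have hμae : ∀ᵐ t ∂μ, t ∈ E := hμ
    calc _ ≤ ∫⁻ p, (fun q : ℝ × (Fin d → ℝ) => ENNReal.ofReal (κ * (ε^d)^2) * ∫⁻ t, radialKernel (H * (d - γ)) (dist q.1 t) ∂μ) p ∂m := by
          apply lintegral_mono_ae
          filter_upwards [hmae] with p hp
          rw [hm]
          refine (lintegral_prod_le _).trans ?_
          rw [← lintegral_const_mul' _ _ ENNReal.ofReal_ne_top]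
          apply lintegral_mono_ae
          filter_upwards [hμae] with t ht
          exact hin p.1 hp.1 p.2 hp.2 t ht
      _ ≤ ∫⁻ s, ∫⁻ x : Fin d → ℝ, ENNReal.ofReal (κ * (ε^d)^2) * ∫⁻ t, radialKernel (H * (d - γ)) (dist s t) ∂μ ∂ν ∂μ :=
          lintegral_prod_le _
      _ = ENNReal.ofReal (κ * (ε^d)^2) * energy (fun x y : ℝ => dist x y) (H * (d - γ)) μ * ν univ := by
          simp only [lintegral_const]
          rw [lintegral_mul_const' _ _ (measure_ne_top _ _), lintegral_const_mul' _ _ ENNReal.ofReal_ne_top]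
          rfl
      _ ≤ _ := mul_le_mul_right hνC _
  set S := {ω | m {p | (ω,p) ∈ A} ≠ 0}
  set En := energy (fun x y : ℝ => dist x y) (H * (d - γ)) μ
  have hεd : ENNReal.ofReal (ε^d) ^ 2 ≠ 0 := by
    apply pow_ne_zero; simp; positivity
  have hεd' : ENNReal.ofReal (ε^d) ^ 2 ≠ ∞ := ENNReal.pow_ne_top ENNReal.ofReal_ne_top
  have hfin : ENNReal.ofReal (ε^d) ^ 2 * (ENNReal.ofReal c ^ 2 * (ν univ)^2) ≤
      ENNReal.ofReal (ε^d) ^ 2 * (P S * (ENNReal.ofReal (κ * C) * En)) := by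
    calc _ = (ENNReal.ofReal (c * ε^d) * ν univ)^2 := by rw [ENNReal.ofReal_mul hc.le]; ring
      _ ≤ (∫⁻ p, P {ω | (ω, p) ∈ A} ∂m)^2 := by gcongr
      _ ≤ _ := hpz
      _ ≤ P S * (ENNReal.ofReal (κ * (ε^d)^2) * En * ENNReal.ofReal C) := mul_le_mul_right hsecond _
      _ = _ := by
        rw [ENNReal.ofReal_mul hκ0.le, ENNReal.ofReal_mul hκ0.le, ENNReal.ofReal_pow (by positivity)]; ring
  exact (ENNReal.mul_le_mul_iff_right hεd hεd').1 hfin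

lemma fb_lower {Ω : Type*} [MeasurableSpace Ω] (P : Measure Ω) [IsProbabilityMeasure P]
    (H : ℝ) (hH : H ∈ Ioo (0 : ℝ) 1) (d : ℕ) (hd : 0 < d)
    (B : Ω → ℝ → EuclideanSpace ℝ (Fin d)) (hB : IsFBM P H d B)
    (a b : ℝ) (ha : 0 < a) (hab : a < b) (hb : b ≤ 1)
    (f : ℝ → EuclideanSpace ℝ (Fin d)) (hf : HolderWithExp f H (Set.Icc a b))
    (E : Set ℝ) (hE : IsCompact E) (hEI : E ⊆ Set.Icc a b)
    (F : Set (EuclideanSpace ℝ (Fin d))) (hF : IsCompact F)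
    (γ : ℝ) (hγ : 0 < γ) (hγF : ENNReal.ofReal γ < dimH F) (hγd : γ < d)
    (μ : Measure ℝ) [IsProbabilityMeasure μ] (hμ : μ Eᶜ = 0)
    (hen : energy (fun x y : ℝ => dist x y) (H * (d - γ)) μ ≠ ∞) :
    P {ω | ∃ t ∈ E, B ω t + f t ∈ F} ≠ 0 := by
  obtain ⟨K', hK'⟩ := hf
  set e := EuclideanSpace.equiv (Fin d) ℝ with he
  set f' : ℝ → Fin d → ℝ := fun t => e (f t) with hf'
  set F' : Set (Fin d → ℝ) := e '' F with hF'
  have hFc : IsCompact F' := hF.image e.continuous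
  have hHol : ∀ x ∈ Icc a b, ∀ y ∈ Icc a b, dist (f' x) (f' y) ≤ |K'| * |x - y| ^ H := by
    intro x hx y hy
    have h1 : ‖f x - f y‖ ≤ |K'| * |x - y| ^ H := by
      refine (hK' x hx y hy).trans ?_
      gcongr; exact le_abs_self _
    refine le_trans ?_ h1
    rw [dist_pi_le_iff (norm_nonneg _)]
    intro i
    rw [Real.dist_eq]
    have h2 := PiLp.norm_apply_le (f x - f y) i
    simp only [PiLp.sub_apply, Real.norm_eq_abs] at h2
    exact h2
  have hfc : ContinuousOn f' (Icc a b) := by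
    intro x hx
    rw [ContinuousWithinAt, tendsto_iff_dist_tendsto_zero]
    apply squeeze_zero' (g := fun y => |K'| * |y - x|^H)
    · exact Filter.Eventually.of_forall fun _ => dist_nonneg
    · filter_upwards [self_mem_nhdsWithin] with y hy
      exact hHol y hy x hx
    · have : Filter.Tendsto (fun y => |K'| * |y - x|^H) (nhds x) (nhds (|K'| * |x - x|^H)) := by
        apply Filter.Tendsto.const_mul
        apply Filter.Tendsto.rpow_const
        · exact ((continuous_id.sub continuous_const).abs).tendsto _
        · right; exact hH.1.le
      rw [sub_self, abs_zero, Real.zero_rpow hH.1.ne', mul_zero] at this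
      exact this.mono_left nhdsWithin_le_nhds
  obtain ⟨R1, hR1⟩ := hFc.isBounded.exists_norm_le
  obtain ⟨R2, hR2⟩ := (isCompact_Icc.image_of_continuousOn hfc).isBounded.exists_norm_le
  have hM : ∀ t ∈ E, ∀ x ∈ F', ∀ i, |x i - f' t i| ≤ |R1| + |R2| := by
    intro t ht x hx i
    have h1 : |x i| ≤ R1 := by rw [← Real.norm_eq_abs]; exact (norm_le_pi_norm x i).trans (hR1 x hx)
    have h2 : |f' t i| ≤ R2 := by
      rw [← Real.norm_eq_abs]; exact (norm_le_pi_norm (f' t) i).trans (hR2 _ ⟨t, hEI ht, rfl⟩)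
    have h3 := abs_sub (x i) (f' t i)
    linarith [le_abs_self R1, le_abs_self R2]
  have hdim : ENNReal.ofReal γ < dimH F' := by
    rw [hF', ContinuousLinearEquiv.dimH_image]; exact hγF
  obtain ⟨m0, hm0, C, hC, n0, hfro⟩ := fb_frostman d F' hFc γ hγ hdim
  obtain ⟨c, K2, hc, hK2, hmain⟩ := fb_lower1 P H hH d hd B hB a b ha hab hb f' |K'| (abs_nonneg _) hfc hHol E hEI F'
    (|R1| + |R2|) (by positivity) hM γ hγd C hC μ hμ
  set En := energy (fun x y : ℝ => dist x y) (H * (d - γ)) μ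
  have hS : ∀ n, n0 ≤ n → ∃ S : Set Ω, MeasurableSet S ∧ S ⊆ {ω | ∃ t ∈ E, ∃ x ∈ F', ∀ i, |B ω t i + f' t i - x i| ≤ (1/2)^n} ∧
        ENNReal.ofReal c ^ 2 * m0^2 ≤ P S * (ENNReal.ofReal K2 * En) := by
    intro n hn
    obtain ⟨ν, h1, h2, h3, h4, h5⟩ := hfro n hn
    obtain ⟨S, hS1, hS2, hS3⟩ := hmain n ν h1 h2 h4 h5
    refine ⟨S, hS1, hS2, le_trans ?_ hS3⟩
    gcongr
  set p0 := ENNReal.ofReal c ^ 2 * m0^2 / (ENNReal.ofReal K2 * En) with hp0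
  have hp0pos : p0 ≠ 0 := by
    apply (ENNReal.div_pos _ (ENNReal.mul_ne_top ENNReal.ofReal_ne_top hen)).ne'
    apply mul_ne_zero
    · apply pow_ne_zero; simpa using hc
    · exact pow_ne_zero _ hm0
  have hS' : ∀ n, ∃ S : Set Ω, MeasurableSet S ∧ S ⊆ {ω | ∃ t ∈ E, ∃ x ∈ F', ∀ i, |B ω t i + f' t i - x i| ≤ (1/2)^n} ∧
      p0 ≤ P S := by
    intro n
    obtain ⟨S, h1, h2, h3⟩ := hS (max n n0) (le_max_right _ _)
    refine ⟨S, h1, ?_, ENNReal.div_le_of_le_mul h3⟩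
    intro ω hω
    obtain ⟨t, ht, x, hx, h⟩ := h2 hω
    refine ⟨t, ht, x, hx, fun i => (h i).trans ?_⟩
    exact pow_le_pow_of_le_one (by norm_num) (by norm_num) (le_max_left _ _)
  choose S hSm hSs hSp using hS'
  set U : ℕ → Set Ω := fun N => ⋃ n ≥ N, S n with hU
  have hUm : ∀ N, MeasurableSet (U N) := fun N => MeasurableSet.iUnion fun n => MeasurableSet.iUnion fun _ => hSm n
  have hUa : Antitone U := by
    intro N N' h ω hω
    simp only [hU, mem_iUnion] at hω ⊢
    obtain ⟨n, hn, hω⟩ := hω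
    exact ⟨n, h.trans hn, hω⟩
  have hlim := tendsto_measure_iInter_atTop (μ := P) (fun N => (hUm N).nullMeasurableSet) hUa ⟨0, measure_ne_top _ _⟩
  have hge : p0 ≤ P (⋂ N, U N) := by
    apply ge_of_tendsto hlim
    apply Filter.Eventually.of_forall
    intro N
    refine (hSp N).trans (measure_mono ?_)
    intro ω hω
    simp only [hU, mem_iUnion]
    exact ⟨N, le_refl N, hω⟩
  have hsub : (⋂ N, U N) ⊆ {ω | ∃ t ∈ E, B ω t + f t ∈ F} := by
    intro ω hω
    have hω' : ∀ N : ℕ, ∃ t ∈ E, ∃ x ∈ F', dist (e (B ω t) + f' t) x ≤ (1/2)^N := by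
      intro N
      have h1 := mem_iInter.1 hω N
      simp only [hU, mem_iUnion] at h1
      obtain ⟨n, hn, h2⟩ := h1
      obtain ⟨t, ht, x, hx, h⟩ := hSs n h2
      refine ⟨t, ht, x, hx, ?_⟩
      rw [dist_pi_le_iff (by positivity)]
      intro i
      rw [Real.dist_eq]
      refine (h i).trans (pow_le_pow_of_le_one (by norm_num) (by norm_num) hn)
    have hcont : ContinuousOn (fun p : ℝ × (Fin d → ℝ) => dist (e (B ω p.1) + f' p.1) p.2) (E ×ˢ F') := by
      have h1 : ContinuousOn (fun t => e (B ω t) + f' t) E := by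
        apply ContinuousOn.add
        · exact e.continuous.comp_continuousOn ((hB.cont ω).mono fun t ht => ⟨ha.le.trans (hEI ht).1, (hEI ht).2.trans hb⟩)
        · exact hfc.mono hEI
      exact continuous_dist.comp_continuousOn
        ((h1.comp continuousOn_fst (fun p hp => hp.1)).prodMk continuousOn_snd)
    have hne : (E ×ˢ F').Nonempty := by
      obtain ⟨t, ht, x, hx, _⟩ := hω' 0
      exact ⟨(t, x), ht, hx⟩
    obtain ⟨⟨t, x⟩, ⟨ht, hx⟩, hmin⟩ := (hE.prod hFc).exists_isMinOn hne hcont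
    have h0 : dist (e (B ω t) + f' t) x ≤ 0 := by
      apply ge_of_tendsto (tendsto_pow_atTop_nhds_zero_of_lt_one (by norm_num : (0:ℝ) ≤ 1/2) (by norm_num))
      apply Filter.Eventually.of_forall
      intro N
      obtain ⟨t', ht', x', hx', h⟩ := hω' N
      exact (hmin (show (t', x') ∈ E ×ˢ F' from ⟨ht', hx'⟩)).trans h
    have h1 := dist_le_zero.1 h0
    refine ⟨t, ht, ?_⟩
    obtain ⟨y, hy, hyx⟩ := hx
    simp only at ht
    have : e (B ω t + f t) = e y := by
      rw [map_add]; exact h1.trans hyx.symm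
    rw [e.injective this]
    exact hy
  intro hzero
  apply hp0pos
  exact le_antisymm (hge.trans ((measure_mono hsub).trans hzero.le)) zero_le

theorem fb_final {Ω : Type*} [MeasurableSpace Ω] (P : Measure Ω) [IsProbabilityMeasure P]
    (H : ℝ) (hH : H ∈ Set.Ioo (0 : ℝ) 1) (d : ℕ) (hd : 0 < d)
    (B : Ω → ℝ → EuclideanSpace ℝ (Fin d)) (hB : IsFBM P H d B)
    (a b : ℝ) (ha : 0 < a) (hab : a < b) (hb : b ≤ 1)
    (f : ℝ → EuclideanSpace ℝ (Fin d)) (hf : HolderWithExp f H (Set.Icc a b))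
    (E : Set ℝ) (hE : IsCompact E) (hEI : E ⊆ Set.Icc a b)
    (F : Set (EuclideanSpace ℝ (Fin d))) (hF : IsCompact F)
    (hdim0 : 0 < dimH F)
    (hdimM : dimH F ≤
      ENNReal.ofReal (upMinkDim (fun x y : EuclideanSpace ℝ (Fin d) => dist x y) F))
    (γ γ' : ℝ) (hγ : 0 < γ) (hγF : ENNReal.ofReal γ < dimH F)
    (hM : upMinkDim (fun x y : EuclideanSpace ℝ (Fin d) => dist x y) F < γ') (hγd' : γ' < d) :
      ∃ c : ℝ, 1 ≤ c ∧
        (ENNReal.ofReal c)⁻¹ * capacity (fun x y : ℝ => dist x y) (H * (d - γ)) E ≤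
          P {ω | ∃ t ∈ E, B ω t + f t ∈ F} ∧
        P {ω | ∃ t ∈ E, B ω t + f t ∈ F} ≤
          ENNReal.ofReal c * hMeasure (fun x y : ℝ => dist x y) (H * (d - γ')) E := by
  have hup0 : 0 < upMinkDim (fun x y : EuclideanSpace ℝ (Fin d) => dist x y) F :=
    ENNReal.ofReal_pos.1 (hdim0.trans_le hdimM)
  have hγd : γ < d := by
    have h1 := hγF.trans_le hdimM
    rw [ENNReal.ofReal_lt_ofReal_iff hup0] at h1
    linarith
  set p := P {ω | ∃ t ∈ E, B ω t + f t ∈ F} with hp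
  have hp1 : p ≤ 1 := prob_le_one
  set h := hMeasure (fun x y : ℝ => dist x y) (H * (d - γ')) E with hh
  set cap := capacity (fun x y : ℝ => dist x y) (H * (d - γ)) E with hcap
  have hα : 0 < H * (d - γ) := mul_pos hH.1 (by linarith)
  have hcap1 : cap ≤ 1 := by
    rw [hcap, capacity, ENNReal.inv_le_one]
    refine le_iInf fun μ => le_iInf fun hμp => le_iInf fun hμ => ?_
    have hμae : ∀ᵐ t ∂μ, t ∈ E := hμ
    have e1 : (1:ℝ≥0∞) = ∫⁻ _, ∫⁻ _, 1 ∂μ ∂μ := by simp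
    rw [e1, energy]
    apply lintegral_mono_ae
    filter_upwards [hμae] with u hu
    apply lintegral_mono_ae
    filter_upwards [hμae] with v hv
    rw [radialKernel, if_pos hα, ENNReal.rpow_neg, ENNReal.one_le_inv]
    apply ENNReal.rpow_le_one _ hα.le
    rw [ENNReal.ofReal_le_one, Real.dist_eq, abs_le]
    have h1 := hEI hu
    have h2 := hEI hv
    constructor <;> linarith [h1.1, h1.2, h2.1, h2.2]
  have hlow : cap ≠ 0 → p ≠ 0 := by
    intro hc
    rw [hcap, capacity, ne_eq, ENNReal.inv_eq_zero, ← ne_eq, ← lt_top_iff_ne_top] at hc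
    simp only [iInf_lt_iff] at hc
    obtain ⟨μ, hμp, hμ, hen⟩ := hc
    exact fb_lower P H hH d hd B hB a b ha hab hb f hf E hE hEI F hF γ hγ hγF hγd μ hμ hen.ne
  have hupp : h = 0 → p = 0 := fun h0 =>
    fb_upper P H hH d B hB a b ha hb f hf E hEI F hF hup0 γ' hM hγd' h0
  refine ⟨max 1 (max (p⁻¹.toReal) (h⁻¹.toReal)), le_max_left _ _, ?_, ?_⟩
  · by_cases hc : cap = 0
    · rw [hc]; simp
    · have hp0 := hlow hc
      calc _ ≤ (p⁻¹)⁻¹ * 1 := by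
            refine mul_le_mul' (ENNReal.inv_le_inv.2 ?_) hcap1
            refine (ENNReal.ofReal_toReal (ENNReal.inv_ne_top.2 hp0)).symm.le.trans ?_
            exact ENNReal.ofReal_le_ofReal ((le_max_left _ _).trans (le_max_right _ _))
        _ = p := by simp
  · by_cases h0 : h = 0
    · rw [hupp h0]; exact zero_le
    · by_cases hT : h = ∞
      · rw [hT, ENNReal.mul_top (by simp)]
        exact le_top
      · calc p ≤ h⁻¹ * h := by rw [ENNReal.inv_mul_cancel h0 hT]; exact hp1
          _ ≤ _ := by
            refine mul_le_mul_left ?_ _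
            refine (ENNReal.ofReal_toReal (ENNReal.inv_ne_top.2 h0)).symm.le.trans ?_
            exact ENNReal.ofReal_le_ofReal ((le_max_right _ _).trans (le_max_right _ _))

end

/-- Proposition 3.5: if `0 < dim F ≤ updim_M F < d`, then for all
`γ, γ'` with `0 < γ < dim F` and `updim_M F < γ' < d`,
`c⁻¹ C^{H(d-γ)}(E) ≤ ℙ((B^H+f)(E) ∩ F ≠ ∅) ≤ c ℋ^{H(d-γ')}(E)`. -/
theorem statement10 {Ω : Type*} [MeasurableSpace Ω] (ℙ : Measure Ω) [IsProbabilityMeasure ℙ]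
    (H : ℝ) (hH : H ∈ Set.Ioo (0 : ℝ) 1) (d : ℕ) (hd : 0 < d)
    (B : Ω → ℝ → EuclideanSpace ℝ (Fin d)) (hB : IsFBM ℙ H d B)
    (a b : ℝ) (ha : 0 < a) (hab : a < b) (hb : b ≤ 1)
    (f : ℝ → EuclideanSpace ℝ (Fin d)) (hf : HolderWithExp f H (Set.Icc a b))
    (E : Set ℝ) (hE : IsCompact E) (hEI : E ⊆ Set.Icc a b)
    (F : Set (EuclideanSpace ℝ (Fin d))) (hF : IsCompact F)
    (hdim0 : 0 < dimH F)
    (hdimM : dimH F ≤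
      ENNReal.ofReal (upMinkDim (fun x y : EuclideanSpace ℝ (Fin d) => dist x y) F))
    (hMd : upMinkDim (fun x y : EuclideanSpace ℝ (Fin d) => dist x y) F < d) :
    ∀ γ γ' : ℝ, 0 < γ → ENNReal.ofReal γ < dimH F →
      upMinkDim (fun x y : EuclideanSpace ℝ (Fin d) => dist x y) F < γ' → γ' < d →
      ∃ c : ℝ, 1 ≤ c ∧
        (ENNReal.ofReal c)⁻¹ * capacity (fun x y : ℝ => dist x y) (H * (d - γ)) E ≤
          ℙ {ω | ∃ t ∈ E, B ω t + f t ∈ F} ∧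
        ℙ {ω | ∃ t ∈ E, B ω t + f t ∈ F} ≤
          ENNReal.ofReal c * hMeasure (fun x y : ℝ => dist x y) (H * (d - γ')) E := by
  intro γ γ' hγ hγF hM hγd'
  exact fb_final ℙ H hH d hd B hB a b ha hab hb f hf E hE hEI F hF hdim0 hdimM γ γ' hγ hγF hM hγd'
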